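/- arXiv:1701.00269 — 2 statements merged into one kernel-verified Lean document; each statement's English description precedes it below -/
import Mathlib

section
/- For all integers r ≥ 3 and k ≥ 3, with k even if r = 3, there exists a constant C = C(r,k) > 0 such that for all sufficiently large n, the number g_r(n,k) of edge-colored (r−1)-uniform hypergraphs G with vertex set contained in [n] whose extension G* is C_k-free is at most 2^{C·n^{r−1}·(log n)^{(r−3)/(r−2)}}. -/
/-!
The proof encodes a pair `(G, χ)` in `O(n ^ (r - 1))` bits; since `logb 2 n ≥ 1` for `n ≥ 2`, the
logarithmic factor of the statement is not needed. Put `u = r - 2`.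

Split an edge of `G` into its column (its largest vertex) and its row (the remaining `u` vertices).
Inside a row, colors are announced by *predictors*: a predictor is either a constant color or the
instruction to copy the color found in the same column of an earlier row. For each row, predictors
are selected greedily (`exists_greedy`), so after `i` of them the uncovered edges of the row have
two properties: no color is repeated in more than `n / (i + 1)` columns, and no two rows agree in
more than `n / (i + 1)` columns.

If the uncovered edges had density `δ` with `δ ^ k` a large multiple of `1 / (i + 1)`, dependent
counting (`exists_rows`) gives `k` rows forming a loose path (a matching if `u = 1`) that are all
uncovered in the same set of `≥ (δ / 4) ^ k * n` columns. Choosing columns in this set so that all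
colors are new (`exists_columns`) yields a loose `k`-cycle in the extension
(`hasLooseCycle_of_skeleton`): the rows follow the path, and its two ends are joined through a common
column. For `u = 1` rows are single vertices, and the cycle must alternate between a common row and a
common column, whence `k` even. So at most `O(n ^ (r - 1) * (i + 1) ^ (-1 / k))` edges remain
uncovered after `i` predictors (`density_bound`, `exists_predictors`).

The code of `(G, χ)` consists of the first `2 ^ J ≈ √n` predictors of each row, which cost
`O(n ^ u * √n * log n)` bits, and, for each `(r - 1)`-set, either a blank (not an edge), the position
of the first correct predictor, or the explicit color. A position `i` costs about `log i` bits and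
an explicit color `O(log n)` bits. By the polynomial decay the total is a geometric series of size
`O(n ^ (r - 1))` (`exists_total_cost`), and a Kraft-type inequality (`card_weighted_le`, `sum_kraft`)
turns this into a bound for the number of codes. Copying only from rows that are earlier in a fixed
enumeration makes the code decodable (`reads_injective`).
-/

/-- A hypergraph `H` contains a loose `k`-cycle. -/
def HasLooseCycle (k : ℕ) (H : Finset (Finset ℕ)) : Prop :=
  ∃ (e : ZMod k → Finset ℕ) (v : ZMod k → ℕ),
    Function.Injective e ∧ Function.Injective v ∧
    (∀ i, e i ∈ H) ∧
    (∀ i, e i ∩ e (i + 1) = ({v i} : Finset ℕ)) ∧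
    (∀ i j, j ≠ i → j ≠ i + 1 → i ≠ j + 1 → e i ∩ e j = ∅)

/-- The extension of an edge-colored hypergraph: each edge `e` becomes `e ∪ {χ e}`. -/
def Extension (G : Finset (Finset ℕ)) (χ : Finset ℕ → ℕ) : Finset (Finset ℕ) :=
  G.image fun e => insert (χ e) e

namespace LooseCount

open Finset

/-! ### A weighted count of words, and greedy covering -/

/-- A Kraft-type bound: words over `A` indexed by `E` whose letters have total length at most `S`
number at most `4 ^ S * W ^ |E|`, where `W` bounds `∑ (1 / 4) ^ length`. Each such word has weight
`∏ (1 / 4) ^ length ≥ 4 ^ (-S)`, and the weights of all words multiply out to a power. -/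
lemma card_weighted_le {E A : Type*} [Fintype E] [Fintype A] [DecidableEq E]
    (l : A → ℕ) (W : ℝ) (hW : ∑ a, (1 / 4 : ℝ) ^ l a ≤ W) (S : ℕ) :
    ((univ.filter fun σ : E → A => ∑ e, l (σ e) ≤ S).card : ℝ)
      ≤ 4 ^ S * W ^ Fintype.card E := by
  classical
  have h0 : ∑ σ : E → A, ∏ e, (1 / 4 : ℝ) ^ l (σ e) = (∑ a, (1 / 4 : ℝ) ^ l a) ^ Fintype.card E := by
    have := Finset.prod_univ_sum (fun _ : E => (univ : Finset A)) (fun _ a => (1 / 4 : ℝ) ^ l a)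
    rw [Fintype.piFinset_univ] at this
    rw [← this, Finset.prod_const, Finset.card_univ]
  have hnn : 0 ≤ ∑ a, (1 / 4 : ℝ) ^ l a := by positivity
  calc ((univ.filter fun σ : E → A => ∑ e, l (σ e) ≤ S).card : ℝ)
      = ∑ σ ∈ univ.filter (fun σ : E → A => ∑ e, l (σ e) ≤ S), (1 : ℝ) := by simp
    _ ≤ ∑ σ ∈ univ.filter (fun σ : E → A => ∑ e, l (σ e) ≤ S),
          4 ^ S * ∏ e, (1 / 4 : ℝ) ^ l (σ e) := by
        apply Finset.sum_le_sum
        intro σ hσ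
        simp only [mem_filter, mem_univ, true_and] at hσ
        rw [Finset.prod_pow_eq_pow_sum]
        calc (1 : ℝ) = 4 ^ S * (1 / 4) ^ S := by rw [← mul_pow]; norm_num
          _ ≤ _ := by
            apply mul_le_mul_of_nonneg_left _ (by positivity)
            exact pow_le_pow_of_le_one (by norm_num) (by norm_num) hσ
    _ ≤ ∑ σ : E → A, 4 ^ S * ∏ e, (1 / 4 : ℝ) ^ l (σ e) := by
        apply Finset.sum_le_sum_of_subset_of_nonneg (filter_subset _ _)
        intros; positivity
    _ = 4 ^ S * (∑ a, (1 / 4 : ℝ) ^ l a) ^ Fintype.card E := by rw [← Finset.mul_sum, h0]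
    _ ≤ _ := by gcongr

/-- Greedy covering of `R` by sets `A t`, `t ∈ H`: choosing each time the set covering most of what
remains, after `i` steps no set covers more than a `1 / (i + 1)` fraction of `R`, since the
remainder only shrinks and the `i + 1` pieces chosen so far are disjoint. -/
lemma exists_greedy {ι : Type*} (H : Finset ι) (hH : H.Nonempty) (A : ι → Finset ℕ)
    (R : Finset ℕ) :
    ∃ s : ℕ → ι, (∀ i, s i ∈ H) ∧ ∀ i, ∀ t ∈ H,
      (i + 1) * ((R \ (range i).biUnion fun j => A (s j)) ∩ A t).card ≤ R.card := by
  classical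
  have hb : ∀ Q : Finset ℕ, ∃ b ∈ H, ∀ t ∈ H, (Q ∩ A t).card ≤ (Q ∩ A b).card := fun Q =>
    Finset.exists_max_image H (fun t => (Q ∩ A t).card) hH
  choose b hbH hb using hb
  let Q : ℕ → Finset ℕ := fun i => Nat.rec R (fun _ P => P \ A (b P)) i
  have hQ1 : ∀ i, Q (i + 1) = Q i \ A (b (Q i)) := fun i => rfl
  have hQ : ∀ i, Q i = R \ (range i).biUnion fun j => A (b (Q j)) := by
    intro i
    induction i with
    | zero => simp [Q]
    | succ i ih =>
      rw [hQ1, ih, range_add_one, biUnion_insert, ← ih]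
      ext y
      rw [ih]
      simp only [mem_sdiff, mem_union]
      tauto
  have hanti : Antitone Q := antitone_nat_of_succ_le fun i => by
    rw [hQ1]; exact sdiff_subset
  have hsum : ∀ i, ∑ j ∈ range i, (Q j ∩ A (b (Q j))).card + (Q i).card = R.card := by
    intro i
    induction i with
    | zero => simp [Q]
    | succ i ih =>
      rw [sum_range_succ, ← ih, hQ1]
      have := card_sdiff_add_card_inter (Q i) (A (b (Q i)))
      omega
  refine ⟨fun i => b (Q i), fun i => hbH _, fun i t ht => ?_⟩
  rw [← hQ i]
  have h1 : ∑ j ∈ range (i + 1), (Q i ∩ A t).card ≤ ∑ j ∈ range (i + 1), (Q j ∩ A (b (Q j))).card := by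
    apply sum_le_sum
    intro j hj
    refine le_trans (card_le_card ?_) (hb (Q j) t ht)
    exact inter_subset_inter_right (hanti (by simp at hj; omega))
  rw [sum_const, card_range, smul_eq_mul] at h1
  have := hsum (i + 1)
  omega

/-! ### Loose cycles from skeletons -/

/-- Columns `y j`, `j ∈ s`, can be chosen one after another in `Z` so that the vertices `y (κ i)` and
the colors of the edges `insert (y (κ i)) (X i)` are new and as distinct as possible. At each step
the hypotheses `h1`, `h2` say that only a `1 / q` proportion of the columns repeats a given color
or gives equal colors to two given rows, so `hZ` leaves an admissible column. -/
lemma exists_columns {ι : Type*} [Fintype ι] [DecidableEq ι] (c : Finset ℕ → ℕ)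
    (X : ι → Finset ℕ) (κ : ι → ℕ) (U Z : Finset ℕ) (n q b : ℕ) (hq : q ≤ n)
    (h1 : ∀ i p, q * (Z.filter fun y => c (insert y (X i)) = p).card ≤ n)
    (h2 : ∀ i j, i ≠ j → κ i = κ j →
      q * (Z.filter fun y => c (insert y (X i)) = c (insert y (X j))).card ≤ n)
    (hself : ∀ i, ∀ y ∈ Z, c (insert y (X i)) ≠ y)
    (hZ : ((U.card + b + Fintype.card ι) * (1 + Fintype.card ι) + Fintype.card ι ^ 2) * n
      < Z.card * q) (s : Finset ℕ) (hs : s.card ≤ b) :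
    ∃ y : ℕ → ℕ, (∀ j ∈ s, y j ∈ Z ∧ y j ∉ U) ∧ (∀ j ∈ s, ∀ j' ∈ s, y j = y j' → j = j') ∧
      (∀ i, κ i ∈ s → c (insert (y (κ i)) (X i)) ∉ U) ∧
      (∀ i i', κ i ∈ s → κ i' ∈ s →
        c (insert (y (κ i)) (X i)) = c (insert (y (κ i')) (X i')) → i = i') ∧
      (∀ i j, κ i ∈ s → j ∈ s → c (insert (y (κ i)) (X i)) ≠ y j) := by
  classical
  induction s using Finset.induction_on with
  | empty => exact ⟨fun _ => 0, by simp⟩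
  | insert a s ha ih =>
    rw [card_insert_of_notMem ha] at hs
    obtain ⟨y, y1, y2, y3, y4, y5⟩ := ih (by omega)
    set P : Finset ℕ := U ∪ s.image y ∪ univ.image (fun i => c (insert (y (κ i)) (X i))) with hP
    have hPc : P.card ≤ U.card + b + Fintype.card ι := by
      refine (card_union_le _ _).trans ?_
      have e1 := card_union_le U (s.image y)
      have e2 : (s.image y).card ≤ s.card := card_image_le
      have e3 : (univ.image (fun i => c (insert (y (κ i)) (X i)))).card ≤ Fintype.card ι :=
        card_image_le
      omega
    -- the columns spoiling one of the requirements
    set Bad : Finset ℕ := P ∪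
      (univ ×ˢ P).biUnion (fun t : ι × ℕ => Z.filter fun y => c (insert y (X t.1)) = t.2) ∪
      (univ.filter fun t : ι × ι => t.1 ≠ t.2 ∧ κ t.1 = κ t.2).biUnion
        (fun t : ι × ι => Z.filter fun y => c (insert y (X t.1)) = c (insert y (X t.2))) with hBad
    have hB1 : q * ((univ ×ˢ P).biUnion
        (fun t : ι × ℕ => Z.filter fun y => c (insert y (X t.1)) = t.2)).card
        ≤ Fintype.card ι * P.card * n := by
      refine (Nat.mul_le_mul_left _ card_biUnion_le).trans ?_
      rw [mul_sum]
      refine (sum_le_card_nsmul _ _ n fun t _ => h1 t.1 t.2).trans ?_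
      rw [card_product, smul_eq_mul, Finset.card_univ]
    have hB2 : q * ((univ.filter fun t : ι × ι => t.1 ≠ t.2 ∧ κ t.1 = κ t.2).biUnion
        (fun t : ι × ι => Z.filter fun y => c (insert y (X t.1)) = c (insert y (X t.2)))).card
        ≤ Fintype.card ι ^ 2 * n := by
      refine (Nat.mul_le_mul_left _ card_biUnion_le).trans ?_
      rw [mul_sum]
      refine (sum_le_card_nsmul _ _ n fun t ht => ?_).trans ?_
      · simp only [mem_filter, mem_univ, true_and] at ht
        exact h2 t.1 t.2 ht.1 ht.2
      · rw [smul_eq_mul]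
        apply Nat.mul_le_mul_right
        refine (card_filter_le _ _).trans ?_
        rw [Finset.card_univ, Fintype.card_prod, sq]
    have hlt : q * Bad.card < q * Z.card := by
      have e1 : Bad.card ≤ P.card + _ + _ :=
        (card_union_le _ _).trans (Nat.add_le_add_right (card_union_le _ _) _)
      have e2 : q * P.card ≤ P.card * n := by rw [mul_comm]; exact Nat.mul_le_mul_left _ hq
      have e3 := Nat.mul_le_mul_left q e1
      rw [mul_add, mul_add] at e3
      have e4 : (P.card * (1 + Fintype.card ι) + Fintype.card ι ^ 2) * n ≤
          ((U.card + b + Fintype.card ι) * (1 + Fintype.card ι) + Fintype.card ι ^ 2) * n := by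
        gcongr
      nlinarith
    obtain ⟨z, hzZ, hzB⟩ : ∃ z ∈ Z, z ∉ Bad :=
      exists_mem_notMem_of_card_lt_card (Nat.lt_of_mul_lt_mul_left hlt)
    have hzP : z ∉ P := fun h => hzB (by simp only [hBad, mem_union]; tauto)
    have hzc : ∀ i, c (insert z (X i)) ∉ P := fun i h => hzB (by
      rw [hBad]
      refine mem_union_left _ (mem_union_right _ ?_)
      exact mem_biUnion.2 ⟨(i, c (insert z (X i))), by simp [h], by simp [hzZ]⟩)
    have hzz : ∀ i j, i ≠ j → κ i = κ j → c (insert z (X i)) ≠ c (insert z (X j)) :=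
      fun i j hij hκ h => hzB (by
        rw [hBad]
        refine mem_union_right _ ?_
        exact mem_biUnion.2 ⟨(i, j), by simp [hij, hκ], by simp [hzZ, h]⟩)
    have hPU : ∀ p, p ∈ U → p ∈ P := fun p h => by simp [hP, h]
    have hPy : ∀ j ∈ s, y j ∈ P := fun j h => by
      simp only [hP, mem_union, mem_image]; exact Or.inl (Or.inr ⟨j, h, rfl⟩)
    have hPc : ∀ i, c (insert (y (κ i)) (X i)) ∈ P := fun i => by simp [hP]
    have hne : ∀ j ∈ s, j ≠ a := fun j hj h => ha (h ▸ hj)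
    refine ⟨Function.update y a z, ?_, ?_, ?_, ?_, ?_⟩
    · intro j hj
      rcases mem_insert.1 hj with rfl | hj
      · simp only [Function.update_self]; exact ⟨hzZ, fun h => hzP (hPU _ h)⟩
      · rw [Function.update_of_ne (hne j hj)]; exact y1 j hj
    · intro j hj j' hj' h
      rcases mem_insert.1 hj with e1 | g1 <;> rcases mem_insert.1 hj' with e2 | g2
      · rw [e1, e2]
      · rw [e1, Function.update_self, Function.update_of_ne (hne j' g2)] at h
        exact absurd (h ▸ hPy j' g2) hzP
      · rw [e2, Function.update_self, Function.update_of_ne (hne j g1)] at h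
        exact absurd (h ▸ hPy j g1) hzP
      · rw [Function.update_of_ne (hne j g1), Function.update_of_ne (hne j' g2)] at h
        exact y2 j g1 j' g2 h
    · intro i hi
      rcases mem_insert.1 hi with hi | hi
      · rw [hi, Function.update_self]; exact fun h => hzc i (hPU _ h)
      · rw [Function.update_of_ne (hne _ hi)]; exact y3 i hi
    · intro i i' hi hi' h
      rcases mem_insert.1 hi with hi | hi <;> rcases mem_insert.1 hi' with hi' | hi'
      · rw [hi, hi', Function.update_self] at h
        by_contra hii
        exact hzz i i' hii (hi.trans hi'.symm) h
      · rw [hi, Function.update_self, Function.update_of_ne (hne _ hi')] at h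
        exact absurd (h ▸ hPc i') (hzc i)
      · rw [hi', Function.update_self, Function.update_of_ne (hne _ hi)] at h
        exact absurd (h ▸ hPc i) (hzc i')
      · rw [Function.update_of_ne (hne _ hi), Function.update_of_ne (hne _ hi')] at h
        exact y4 i i' hi hi' h
    · intro i j hi hj h
      rcases mem_insert.1 hi with e1 | g1 <;> rcases mem_insert.1 hj with e2 | g2
      · rw [e1, e2, Function.update_self] at h
        exact hself i z hzZ h
      · rw [e1, Function.update_self, Function.update_of_ne (hne _ g2)] at h
        exact hzc i (h ▸ hPy j g2)
      · rw [e2, Function.update_self, Function.update_of_ne (hne _ g1)] at h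
        exact hzP (h ▸ hPc i)
      · rw [Function.update_of_ne (hne _ g1), Function.update_of_ne (hne _ g2)] at h
        exact y5 i j g1 g2 h

/-- A skeleton of rows `X i` and column labels `κ i`, in which consecutive indices share exactly one
thing (a label, or one row vertex) and distant ones share nothing, becomes a loose cycle in the
extension once the labels are replaced by the columns of `exists_columns`: the colors then add a
private vertex to every edge. -/
lemma hasLooseCycle_of_skeleton {k : ℕ} (hk : 3 ≤ k) (G : Finset (Finset ℕ)) (c : Finset ℕ → ℕ)
    (X : ZMod k → Finset ℕ) (κ : ZMod k → ℕ) (Z : Finset ℕ) (n q u : ℕ) (hq : q ≤ n)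
    (hκ : ∀ i, κ i < k) (hX : ∀ i, (X i).card ≤ u)
    (hG : ∀ i, ∀ y ∈ Z, insert y (X i) ∈ G) (hc : ∀ e ∈ G, c e ∉ e)
    (h1 : ∀ i p, q * (Z.filter fun y => c (insert y (X i)) = p).card ≤ n)
    (h2 : ∀ i j, X i ≠ X j →
      q * (Z.filter fun y => c (insert y (X i)) = c (insert y (X j))).card ≤ n)
    (hZ : ((u * k + 2 * k) * (1 + k) + k ^ 2) * n < Z.card * q)
    (hadj : ∀ i, (κ i = κ (i + 1) ∧ X i ≠ X (i + 1) ∧ X i ∩ X (i + 1) = ∅) ∨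
      (κ i ≠ κ (i + 1) ∧ ∃ w, X i ∩ X (i + 1) = {w}))
    (hfar : ∀ i j, j ≠ i → j ≠ i + 1 → i ≠ j + 1 → κ i ≠ κ j ∧ X i ∩ X j = ∅)
    (htri : ∀ i, ¬ (κ i = κ (i + 1) ∧ κ (i + 1) = κ (i + 2)) ∧
      ∀ w, w ∈ X i → w ∈ X (i + 1) → w ∉ X (i + 2)) :
    HasLooseCycle k (Extension G c) := by
  classical
  have : NeZero k := ⟨by omega⟩
  have hcard : Fintype.card (ZMod k) = k := ZMod.card k
  set U : Finset ℕ := univ.biUnion X with hU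
  have hUc : U.card ≤ u * k := by
    refine card_biUnion_le.trans ((sum_le_card_nsmul _ _ u fun i _ => hX i).trans ?_)
    rw [Finset.card_univ, hcard, smul_eq_mul, mul_comm]
  have hXU : ∀ i w, w ∈ X i → w ∈ U := fun i w h => mem_biUnion.2 ⟨i, mem_univ _, h⟩
  have hone : ∀ i : ZMod k, i + 1 ≠ i := by
    intro i h
    have : (1 : ZMod k) = 0 := by simpa using h
    rw [← Nat.cast_one, ZMod.natCast_eq_zero_iff] at this
    exact absurd (Nat.le_of_dvd one_pos this) (by omega)
  have hXne : ∀ i j, i ≠ j → κ i = κ j → X i ≠ X j := by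
    intro i j hij hκ
    by_cases h1 : j = i + 1
    · subst h1
      rcases hadj i with h | h
      · exact h.2.1
      · exact absurd hκ h.1
    by_cases h2 : i = j + 1
    · subst h2
      rcases hadj j with h | h
      · exact h.2.1.symm
      · exact absurd hκ.symm h.1
    exact absurd hκ (hfar i j (Ne.symm hij) h1 h2).1
  obtain ⟨y, y1, y2, y3, y4, y5⟩ := exists_columns c X κ U Z n q k hq h1
    (fun i j hij hκ => h2 i j (hXne i j hij hκ))
    (fun i y hy h => hc _ (hG i y hy) (by rw [h]; exact mem_insert_self _ _)) (by
      rw [hcard]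
      refine lt_of_le_of_lt ?_ hZ
      have : U.card + k + k ≤ u * k + 2 * k := by omega
      gcongr) (range k) (by simp)
  have hr : ∀ i, κ i ∈ range k := fun i => mem_range.2 (hκ i)
  set col : ZMod k → ℕ := fun i => c (insert (y (κ i)) (X i)) with hcol
  have c1 : ∀ i j, col i = col j → i = j := fun i j => y4 i j (hr i) (hr j)
  have c2 : ∀ i j, col i ∉ X j := fun i j h => y3 i (hr i) (hXU _ _ h)
  have c3 : ∀ i j, col i ≠ y (κ j) := fun i j => y5 i _ (hr i) (hr j)
  have c4 : ∀ i j, y (κ i) ∉ X j := fun i j h => (y1 _ (hr i)).2 (hXU _ _ h)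
  have c5 : ∀ i j, y (κ i) = y (κ j) → κ i = κ j := fun i j => y2 _ (hr i) _ (hr j)
  set e : ZMod k → Finset ℕ := fun i => insert (col i) (insert (y (κ i)) (X i)) with he
  have hmem : ∀ i w, w ∈ e i ↔ w = col i ∨ w = y (κ i) ∨ w ∈ X i := fun i w => by simp [he]
  have hboth : ∀ i j, i ≠ j → ∀ w, w ∈ e i → w ∈ e j →
      (κ i = κ j ∧ w = y (κ i)) ∨ (w ∈ X i ∧ w ∈ X j) := by
    intro i j hij w hi hj
    rw [hmem] at hi hj
    rcases hi with rfl | rfl | hi <;> rcases hj with hj | hj | hj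
    · exact absurd (c1 _ _ hj) hij
    · exact absurd hj (c3 _ _)
    · exact absurd hj (c2 _ _)
    · exact absurd hj.symm (c3 _ _)
    · exact Or.inl ⟨c5 _ _ hj, rfl⟩
    · exact absurd hj (c4 _ _)
    · exact absurd (hj ▸ hi) (c2 _ _)
    · exact absurd (hj ▸ hi) (c4 _ _)
    · exact Or.inr ⟨hi, hj⟩
  have hint : ∀ i, ∃ w, e i ∩ e (i + 1) = {w} := by
    intro i
    rcases hadj i with ⟨ha, -, hb⟩ | ⟨ha, w, hb⟩
    · refine ⟨y (κ i), Finset.ext fun w => ?_⟩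
      rw [mem_inter, mem_singleton]
      constructor
      · rintro ⟨h, h'⟩
        rcases hboth i (i + 1) (hone i).symm w h h' with h | h
        · exact h.2
        · exact absurd (mem_inter.2 h) (by simp [hb])
      · rintro rfl
        rw [hmem, hmem, ha]; simp
    · refine ⟨w, Finset.ext fun w' => ?_⟩
      rw [← hb, mem_inter, mem_inter]
      constructor
      · rintro ⟨h, h'⟩
        rcases hboth i (i + 1) (hone i).symm w' h h' with h | h
        · exact absurd h.1 ha
        · exact h
      · rintro ⟨h, h'⟩
        rw [hmem, hmem]; exact ⟨Or.inr (Or.inr h), Or.inr (Or.inr h')⟩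
  have hdis : ∀ i j, j ≠ i → j ≠ i + 1 → i ≠ j + 1 → e i ∩ e j = ∅ := by
    intro i j ha hb hd
    obtain ⟨f1, f2⟩ := hfar i j ha hb hd
    refine Finset.eq_empty_of_forall_notMem fun w hw => ?_
    rw [mem_inter] at hw
    rcases hboth i j ha.symm w hw.1 hw.2 with h | h
    · exact f1 h.1
    · exact absurd (mem_inter.2 h) (by simp [f2])
  have htr : ∀ i w, w ∈ e i → w ∈ e (i + 1) → w ∉ e (i + 2) := by
    intro i w p1 p2 p3
    have e2 : i + 1 + 1 = i + 2 := by ring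
    have q1 := hboth i (i + 1) (hone i).symm w p1 p2
    have q2 := hboth (i + 1) (i + 2) (by rw [← e2]; exact (hone _).symm) w p2 p3
    rcases q1 with q1 | q1 <;> rcases q2 with q2 | q2
    · exact (htri i).1 ⟨q1.1, q2.1⟩
    · exact c4 _ _ (q1.2 ▸ q2.1)
    · exact c4 _ _ (q2.2 ▸ q1.2)
    · exact (htri i).2 w q1.1 q1.2 q2.2
  choose v hv using hint
  have hvm : ∀ i, v i ∈ e i ∧ v i ∈ e (i + 1) := fun i => by
    rw [← mem_inter, hv]; simp
  refine ⟨e, v, ?_, ?_, ?_, hv, hdis⟩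
  · intro i j hij
    by_contra hne
    have key : ∀ i, e i ≠ e (i + 1) := by
      intro i h
      have h1 : col i ∈ e i ∩ e (i + 1) := by rw [← h, inter_self]; simp [hmem]
      have h2 : y (κ i) ∈ e i ∩ e (i + 1) := by rw [← h, inter_self]; simp [hmem]
      rw [hv, mem_singleton] at h1 h2
      exact c3 i i (h1.trans h2.symm)
    by_cases ha : j = i + 1
    · subst ha; exact key i hij
    by_cases hb : i = j + 1
    · subst hb; exact key j hij.symm
    have := hdis i j (Ne.symm hne) ha hb
    rw [← hij, inter_self] at this
    exact absurd this (ne_empty_of_mem ((hmem i (col i)).2 (Or.inl rfl)))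
  · intro i j hij
    by_contra hne
    by_cases ha : j = i + 1
    · subst ha
      refine htr i (v i) (hvm i).1 (hvm i).2 ?_
      rw [hij]
      have := (hvm (i + 1)).2
      rwa [show i + 1 + 1 = i + 2 by ring] at this
    by_cases hb : i = j + 1
    · subst hb
      refine htr j (v j) (hvm j).1 (hvm j).2 ?_
      rw [← hij]
      have := (hvm (j + 1)).2
      rwa [show j + 1 + 1 = j + 2 by ring] at this
    have := hdis i j (Ne.symm hne) ha hb
    have hm : v i ∈ e i ∩ e j := mem_inter.2 ⟨(hvm i).1, hij ▸ (hvm j).1⟩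
    rw [this] at hm
    exact absurd hm (notMem_empty _)
  · intro i
    exact mem_image.2 ⟨insert (y (κ i)) (X i), hG i _ (y1 _ (hr i)).1, rfl⟩

/-! ### Common rows of a dense family -/

/-- Deleting repeatedly all members through a vertex of degree below `d` loses at most `d * |V|`
members and leaves a family in which every vertex that occurs has degree at least `d`. -/
lemma exists_clean (d : ℝ) (hd : 0 ≤ d) (V : Finset ℕ) :
    ∀ F : Finset (Finset ℕ), (∀ x ∈ F, x ⊆ V) → ∃ F' ⊆ F,
      (F.card : ℝ) ≤ F'.card + d * V.card ∧
      ∀ x ∈ F', ∀ v ∈ x, d ≤ ((F'.filter fun z => v ∈ z).card : ℝ) := by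
  induction V using Finset.strongInduction with
  | H V ih =>
    intro F hF
    by_cases h : ∃ v ∈ V, ((F.filter fun z => v ∈ z).card : ℝ) < d
    · obtain ⟨v, hv, hlt⟩ := h
      obtain ⟨F', hF', hc, hdeg⟩ := ih (V.erase v) (erase_ssubset hv) (F.filter fun z => v ∉ z) (by
        intro x hx
        rw [mem_filter] at hx
        intro a ha
        exact mem_erase.2 ⟨fun h => hx.2 (h ▸ ha), hF x hx.1 ha⟩)
      refine ⟨F', hF'.trans (filter_subset _ _), ?_, hdeg⟩
      have e1 := card_filter_add_card_filter_not (s := F) (fun z => v ∈ z)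
      have e2 : ((V.erase v).card : ℝ) + 1 = V.card := by
        exact_mod_cast card_erase_add_one hv
      have e3 : (((F.filter fun z => v ∈ z).card : ℝ)) + ((F.filter fun z => v ∉ z).card : ℝ)
          = F.card := by exact_mod_cast e1
      rw [← e2]
      nlinarith
    · push Not at h
      refine ⟨F, Subset.rfl, ?_, fun x hx v hv => h v (hF x hx hv)⟩
      have : 0 ≤ d * V.card := by positivity
      linarith

/-- Averaging: some `x ∈ T` lies in `F y` for many `y ∈ Y`. -/
lemma exists_popular (F : ℕ → Finset (Finset ℕ)) (T : Finset (Finset ℕ)) (Y : Finset ℕ) (N : ℕ)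
    (A : ℝ) (hA : 0 < A) (hsum : A ≤ ∑ y ∈ Y, ((F y ∩ T).card : ℝ)) (hN : T.card ≤ N) :
    ∃ x ∈ T, A ≤ N * ((Y.filter fun y => x ∈ F y).card : ℝ) := by
  by_contra! h
  have e0 : ∑ y ∈ Y, (F y ∩ T).card = ∑ x ∈ T, (Y.filter fun y => x ∈ F y).card := by
    have := sum_card_bipartiteAbove_eq_sum_card_bipartiteBelow (s := Y) (t := T)
      (fun y x => x ∈ F y)
    simp only [bipartiteAbove, bipartiteBelow] at this
    rw [← this]
    refine sum_congr rfl fun y _ => congrArg _ ?_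
    ext x; simp [and_comm]
  have e1 : (∑ y ∈ Y, ((F y ∩ T).card : ℝ)) = ∑ x ∈ T, ((Y.filter fun y => x ∈ F y).card : ℝ) := by
    exact_mod_cast e0
  have hT : T.Nonempty := by
    by_contra hT
    rw [not_nonempty_iff_eq_empty] at hT
    subst hT
    simp at hsum
    linarith
  have e2 : ∑ x ∈ T, (N : ℝ) * ((Y.filter fun y => x ∈ F y).card : ℝ) < ∑ x ∈ T, A :=
    sum_lt_sum_of_nonempty hT h
  rw [← mul_sum, ← e1, sum_const, nsmul_eq_mul] at e2
  have hN' : (T.card : ℝ) ≤ N := by exact_mod_cast hN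
  have e3 : (N : ℝ) * A ≤ N * ∑ y ∈ Y, ((F y ∩ T).card : ℝ) := by gcongr
  have e4 : (T.card : ℝ) * A ≤ N * A := by gcongr
  linarith

/-- Building a structure row by row: if each partial structure, alive in every column of a set `Y`,
has at most `N` candidate extensions of which a proportion `ε` is alive in each single column, then
some candidate stays alive in a proportion `ε` of the columns. -/
lemma exists_chain {k : ℕ} (F : ℕ → Finset (Finset ℕ)) (N : ℕ) (ε : ℝ) (hN : 0 < N) (hε : 0 < ε)
    (P : ℕ → (ℕ → Finset ℕ) → Prop)
    (hext : ∀ m X (Y : Finset ℕ), m + 1 < k → P m X → Y.Nonempty →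
      (∀ i ≤ m, ∀ y ∈ Y, X i ∈ F y) →
      ∃ T : Finset (Finset ℕ), T.card ≤ N ∧ (∀ y ∈ Y, ε * N ≤ ((F y ∩ T).card : ℝ)) ∧
        ∀ x ∈ T, P (m + 1) (Function.update X (m + 1) x))
    (X0 : Finset ℕ) (Y0 : Finset ℕ) (hY0 : Y0.Nonempty) (hX0 : ∀ y ∈ Y0, X0 ∈ F y)
    (hP0 : P 0 fun _ => X0) (m : ℕ) (hm : m < k) :
    ∃ X Y, P m X ∧ Y ⊆ Y0 ∧ (∀ i ≤ m, ∀ y ∈ Y, X i ∈ F y) ∧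
      ε ^ m * (Y0.card : ℝ) ≤ Y.card := by
  induction m with
  | zero => exact ⟨fun _ => X0, Y0, hP0, Subset.rfl, fun _ _ => hX0, by simp⟩
  | succ m ih =>
    obtain ⟨X, Y, hP, hYY, hXY, hc⟩ := ih (by omega)
    have hY0c : (0 : ℝ) < Y0.card := by exact_mod_cast hY0.card_pos
    have hYc : (0 : ℝ) < Y.card := lt_of_lt_of_le (by positivity) hc
    have hN' : (0 : ℝ) < N := by exact_mod_cast hN
    obtain ⟨T, hT, hTY, hTP⟩ := hext m X Y hm hP (card_pos.1 (by exact_mod_cast hYc)) hXY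
    obtain ⟨x, hx, hxY⟩ := exists_popular F T Y N (ε * N * Y.card) (by positivity) (by
      rw [mul_comm, ← nsmul_eq_mul]
      exact card_nsmul_le_sum _ _ _ hTY) hT
    refine ⟨Function.update X (m + 1) x, Y.filter fun y => x ∈ F y, hTP x hx,
      (filter_subset _ _).trans hYY, ?_, ?_⟩
    · intro i hi y hy
      rw [mem_filter] at hy
      by_cases h : i = m + 1
      · subst h; rw [Function.update_self]; exact hy.2
      · rw [Function.update_of_ne h]; exact hXY i (by omega) y hy.1
    · have e1 : ε * Y.card ≤ ((Y.filter fun y => x ∈ F y).card : ℝ) := by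
        rw [show ε * N * Y.card = N * (ε * Y.card) by ring] at hxY
        exact le_of_mul_le_mul_left hxY hN'
      refine le_trans ?_ e1
      rw [pow_succ']
      rw [mul_assoc]
      gcongr

lemma card_filter_superset_le (n u : ℕ) (S : Finset ℕ) :
    (((Icc 1 n).powersetCard u).filter fun x => S ⊆ x).card ≤ n ^ (u - S.card) := by
  calc _ ≤ ((Icc 1 n).powersetCard (u - S.card)).card := by
        refine card_le_card_of_injOn (fun x => x \ S) ?_ ?_
        · intro x hx
          simp only [mem_coe, mem_filter, mem_powersetCard] at hx
          simp only [mem_coe, mem_powersetCard]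
          exact ⟨sdiff_subset.trans hx.1.1, by rw [card_sdiff_of_subset hx.2, hx.1.2]⟩
        · intro x hx x' hx' h
          simp only [mem_coe, mem_filter] at hx hx'
          simp only at h
          rw [← sdiff_union_of_subset hx.2, h, sdiff_union_of_subset hx'.2]
    _ ≤ _ := by
      rw [card_powersetCard, Nat.card_Icc, Nat.add_sub_cancel]
      exact Nat.choose_le_pow _ _

/-- `X 0, …, X m` is a loose path whose last member has a vertex avoiding all the others. -/
def IsRowPath (m : ℕ) (X : ℕ → Finset ℕ) : Prop :=
  (∀ i < m, ∃ w, X i ∩ X (i + 1) = {w}) ∧ (∀ i j, i + 2 ≤ j → j ≤ m → X i ∩ X j = ∅) ∧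
    ∃ w ∈ X m, ∀ i < m, w ∉ X i

/-- `X 0, …, X m` are pairwise disjoint. -/
def IsRowMatching (m : ℕ) (X : ℕ → Finset ℕ) : Prop :=
  ∀ i j, i < j → j ≤ m → X i ∩ X j = ∅

lemma card_prefix_le {k u m : ℕ} (hm : m + 1 < k) (X : ℕ → Finset ℕ)
    (hX : ∀ i ≤ m, (X i).card = u) : ((range (m + 1)).biUnion X).card ≤ u * k := by
  refine card_biUnion_le.trans ((sum_le_card_nsmul _ _ u fun i hi => ?_).trans ?_)
  · exact (hX i (by simp at hi; omega)).le
  · rw [card_range, smul_eq_mul, mul_comm]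
    exact Nat.mul_le_mul_left _ hm.le

/-- A dense set `D` of (row, column) pairs contains `k` rows which form a matching (`u = 1`) or a loose
path (`u ≥ 2`) and which are all present in a common set `Z` of at least `(δ / 4) ^ k * n`
columns. -/
lemma exists_rows {u k n : ℕ} (hu : 1 ≤ u) (hk : 3 ≤ k) (hn : 1 ≤ n) (D : Finset (Finset ℕ × ℕ))
    (hD : ∀ x y, (x, y) ∈ D → x ∈ (Icc 1 n).powersetCard u ∧ y ∈ Icc 1 n)
    (δ : ℝ) (hδ : (D.card : ℝ) = δ * (n : ℝ) ^ (u + 1)) (hδn : 4 * ((u * k : ℕ) : ℝ) ≤ δ * n) :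
    ∃ (X : ℕ → Finset ℕ) (Z : Finset ℕ), (if u = 1 then IsRowMatching (k - 1) X else
        IsRowPath (k - 1) X) ∧ (∀ i < k, ∀ y ∈ Z, (X i, y) ∈ D) ∧ (δ / 4) ^ k * n ≤ Z.card := by
  classical
  have hn' : (0 : ℝ) < n := by exact_mod_cast hn
  have huk : 1 ≤ u * k := Nat.mul_pos (by omega) (by omega)
  have huk' : (1 : ℝ) ≤ ((u * k : ℕ) : ℝ) := by exact_mod_cast huk
  have hδ0 : 0 < δ := pos_of_mul_pos_left (by linarith : 0 < δ * n) hn'.le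
  set R := (Icc 1 n).powersetCard u with hR
  have hRc : R.card ≤ n ^ u := by
    rw [hR, card_powersetCard, Nat.card_Icc, Nat.add_sub_cancel]
    exact Nat.choose_le_pow _ _
  have hRmem : ∀ x, x ∈ R ↔ x ⊆ Icc 1 n ∧ x.card = u := fun x => mem_powersetCard
  set E : ℕ → Finset (Finset ℕ) := fun y => R.filter fun x => (x, y) ∈ D with hE
  have hEsum : (∑ y ∈ Icc 1 n, ((E y).card : ℝ)) = D.card := by
    have : D.card = ∑ y ∈ Icc 1 n, (E y).card := by
      rw [card_eq_sum_card_fiberwise (f := Prod.snd) (t := Icc 1 n) (fun t ht => (hD t.1 t.2 ht).2)]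
      refine sum_congr rfl fun y _ => ?_
      symm
      refine card_bij (fun x _ => (x, y)) ?_ ?_ ?_
      · intro x hx; exact mem_filter.2 ⟨(mem_filter.1 hx).2, rfl⟩
      · intro x _ x' _ h; exact (Prod.mk.inj h).1
      · rintro ⟨x, y'⟩ h
        simp only [mem_filter] at h
        obtain ⟨h, rfl⟩ := h
        exact ⟨x, by simp only [hE, mem_filter]; exact ⟨(hD _ _ h).1, h⟩, rfl⟩
    exact_mod_cast this.symm
  -- pass to a subfamily in which every row that occurs can be extended in many ways
  obtain ⟨F, hFE, hFc, hFd⟩ : ∃ F : ℕ → Finset (Finset ℕ), (∀ y, F y ⊆ E y) ∧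
      (∀ y, ((E y).card : ℝ) ≤ (F y).card + δ / 2 * (n : ℝ) ^ u) ∧
      ∀ y, ∀ x ∈ F y, (u = 1 → δ / 2 * n ≤ (F y).card) ∧
        (u ≠ 1 → ∀ v ∈ x, δ / 2 * (n : ℝ) ^ (u - 1) ≤ (((F y).filter fun z => v ∈ z).card : ℝ)) := by
    have hone : ∀ y, ∃ F ⊆ E y, ((E y).card : ℝ) ≤ F.card + δ / 2 * (n : ℝ) ^ u ∧
        ∀ x ∈ F, (u = 1 → δ / 2 * n ≤ F.card) ∧
        (u ≠ 1 → ∀ v ∈ x, δ / 2 * (n : ℝ) ^ (u - 1) ≤ ((F.filter fun z => v ∈ z).card : ℝ)) := by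
      intro y
      by_cases h1 : u = 1
      · subst h1
        by_cases h : δ / 2 * n ≤ (E y).card
        · refine ⟨E y, Subset.rfl, ?_, fun x _ => ⟨fun _ => h, fun h => absurd rfl h⟩⟩
          have : 0 ≤ δ / 2 * (n : ℝ) ^ 1 := by positivity
          linarith
        · refine ⟨∅, empty_subset _, ?_, fun x hx => absurd hx (notMem_empty _)⟩
          simp only [card_empty, Nat.cast_zero, pow_one]
          linarith
      · obtain ⟨F, hF, hc, hd⟩ := exists_clean (δ / 2 * (n : ℝ) ^ (u - 1)) (by positivity) (Icc 1 n)
          (E y) (fun x hx => ((hRmem x).1 (mem_filter.1 hx).1).1)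
        refine ⟨F, hF, ?_, fun x hx => ⟨fun h => absurd h h1, fun _ => hd x hx⟩⟩
        rw [Nat.card_Icc, Nat.add_sub_cancel, mul_assoc, ← pow_succ, Nat.sub_add_cancel hu] at hc
        exact hc
    choose F h1 h2 h3 using hone
    exact ⟨F, h1, h2, h3⟩
  have hFR : ∀ y, F y ⊆ R := fun y => (hFE y).trans (filter_subset _ _)
  have hFsum : δ / 2 * (n : ℝ) ^ (u + 1) ≤ ∑ y ∈ Icc 1 n, ((F y ∩ R).card : ℝ) := by
    have e1 : ∑ y ∈ Icc 1 n, ((E y).card : ℝ)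
        ≤ ∑ y ∈ Icc 1 n, (((F y ∩ R).card : ℝ) + δ / 2 * (n : ℝ) ^ u) := by
      refine sum_le_sum fun y _ => ?_
      rw [inter_eq_left.2 (hFR y)]
      exact hFc y
    rw [hEsum, sum_add_distrib, sum_const, Nat.card_Icc, Nat.add_sub_cancel, nsmul_eq_mul, hδ] at e1
    have e2 : (n : ℝ) * (δ / 2 * (n : ℝ) ^ u) = δ / 2 * (n : ℝ) ^ (u + 1) := by ring
    rw [e2] at e1
    linarith
  obtain ⟨X0, hX0R, hX0⟩ := exists_popular F R (Icc 1 n) (n ^ u) _ (by positivity) hFsum hRc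
  set Y0 := (Icc 1 n).filter fun y => X0 ∈ F y with hY0
  have hY0c : δ / 4 * n ≤ Y0.card := by
    have : ((n ^ u : ℕ) : ℝ) * (δ / 2 * n) ≤ ((n ^ u : ℕ) : ℝ) * Y0.card := by
      refine le_trans (le_of_eq ?_) hX0
      push_cast; ring
    have := le_of_mul_le_mul_left this (by push_cast; positivity)
    refine le_trans ?_ this
    have : 0 < δ * n := by positivity
    linarith
  have hY0n : Y0.Nonempty := by
    rw [← card_pos]
    have : (0 : ℝ) < Y0.card := lt_of_lt_of_le (by positivity) hY0c
    exact_mod_cast this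
  have hcards : ∀ (Y : Finset ℕ) (X : ℕ → Finset ℕ) m, Y.Nonempty →
      (∀ i ≤ m, ∀ y ∈ Y, X i ∈ F y) → ∀ i ≤ m, (X i).card = u := by
    intro Y X m ⟨y, hy⟩ h i hi
    exact ((hRmem _).1 (hFR y (h i hi y hy))).2
  have hfin : ∃ (X : ℕ → Finset ℕ) (Y : Finset ℕ), (if u = 1 then IsRowMatching (k - 1) X else
        IsRowPath (k - 1) X) ∧ Y ⊆ Y0 ∧ (∀ i ≤ k - 1, ∀ y ∈ Y, X i ∈ F y) ∧
      (δ / 4) ^ (k - 1) * (Y0.card : ℝ) ≤ Y.card := by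
    by_cases h1 : u = 1
    · simp only [h1, if_true]
      refine exists_chain (k := k) F n (δ / 4) (by omega) (by positivity) IsRowMatching ?_
        X0 Y0 hY0n (fun y hy => (mem_filter.1 hy).2) (fun i j h h' => by omega) (k - 1) (by omega)
      intro m X Y hm hP hYn hXY
      set U := (range (m + 1)).biUnion X with hU
      have hUc : U.card ≤ u * k := card_prefix_le hm X (hcards Y X m hYn hXY)
      refine ⟨R.filter fun x => x ∩ U = ∅, ?_, ?_, ?_⟩
      · refine (card_filter_le _ _).trans (hRc.trans (by simp [h1]))
      · intro y hy
        have e1 : δ / 2 * n ≤ (F y).card := (hFd y (X 0) (hXY 0 (by omega) y hy)).1 h1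
        have e2 : F y ⊆ (F y ∩ R.filter fun x => x ∩ U = ∅) ∪ U.image fun a => {a} := by
          intro x hx
          have hxR := (hRmem x).1 (hFR y hx)
          rw [h1] at hxR
          obtain ⟨a, ha⟩ := card_eq_one.1 hxR.2
          by_cases haU : a ∈ U
          · exact mem_union_right _ (mem_image.2 ⟨a, haU, ha.symm⟩)
          · refine mem_union_left _ (mem_inter.2 ⟨hx, mem_filter.2 ⟨hFR y hx, ?_⟩⟩)
            rw [ha]; exact singleton_inter_of_notMem haU
        have e3 : (F y).card ≤ (F y ∩ R.filter fun x => x ∩ U = ∅).card + u * k :=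
          (card_le_card e2).trans ((card_union_le _ _).trans
            (Nat.add_le_add_left (card_image_le.trans hUc) _))
        have e4 : ((F y).card : ℝ) ≤ (F y ∩ R.filter fun x => x ∩ U = ∅).card + (u * k : ℕ) := by
          exact_mod_cast e3
        linarith
      · intro x hx i j hij hj
        have hxU := (mem_filter.1 hx).2
        rw [Function.update_of_ne (by omega)]
        by_cases h : j = m + 1
        · subst h
          rw [Function.update_self, ← subset_empty, ← hxU, inter_comm]
          exact inter_subset_inter_left (subset_biUnion_of_mem X (mem_range.2 hij))
        · rw [Function.update_of_ne h]; exact hP i j hij (by omega)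
    · simp only [h1, if_false]
      refine exists_chain (k := k) F (n ^ (u - 1)) (δ / 4) (by positivity) (by positivity)
        IsRowPath ?_ X0 Y0 hY0n (fun y hy => (mem_filter.1 hy).2) ?_ (k - 1) (by omega)
      swap
      · refine ⟨fun i h => by omega, fun i j h h' => by omega, ?_⟩
        have : 0 < X0.card := by rw [((hRmem X0).1 hX0R).2]; omega
        obtain ⟨w, hw⟩ := card_pos.1 this
        exact ⟨w, hw, fun i h => by omega⟩
      intro m X Y hm ⟨hP1, hP2, w, hw, hwX⟩ hYn hXY
      set U := (range (m + 1)).biUnion X with hU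
      have hUc : U.card ≤ u * k := card_prefix_le hm X (hcards Y X m hYn hXY)
      have hXU : ∀ i ≤ m, X i ⊆ U := fun i hi =>
        subset_biUnion_of_mem X (mem_range.2 (by omega))
      refine ⟨R.filter fun x => x ∩ U = {w}, ?_, ?_, ?_⟩
      · refine (card_le_card ?_).trans (card_filter_superset_le n u {w})
        intro x hx
        rw [mem_filter] at hx ⊢
        exact ⟨hx.1, hx.2 ▸ inter_subset_left⟩
      · intro y hy
        have e1 := (hFd y (X m) (hXY m le_rfl y hy)).2 h1 w hw
        have e2 : ((F y).filter fun z => w ∈ z) ⊆ (F y ∩ R.filter fun x => x ∩ U = {w}) ∪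
            (U.erase w).biUnion fun a => R.filter fun x => {w, a} ⊆ x := by
          intro x hx
          rw [mem_filter] at hx
          have hwU := hXU m le_rfl hw
          by_cases h : ∃ a ∈ U.erase w, a ∈ x
          · obtain ⟨a, ha, hax⟩ := h
            refine mem_union_right _ (mem_biUnion.2 ⟨a, ha, mem_filter.2 ⟨hFR y hx.1, ?_⟩⟩)
            intro b hb
            simp only [mem_insert, mem_singleton] at hb
            rcases hb with rfl | rfl
            · exact hx.2
            · exact hax
          · push Not at h
            refine mem_union_left _ (mem_inter.2 ⟨hx.1, mem_filter.2 ⟨hFR y hx.1, ?_⟩⟩)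
            ext b
            rw [mem_inter, mem_singleton]
            constructor
            · rintro ⟨hb, hbU⟩
              by_contra hne
              exact h b (mem_erase.2 ⟨hne, hbU⟩) hb
            · rintro rfl; exact ⟨hx.2, hwU⟩
        have e3 : ((U.erase w).biUnion fun a => R.filter fun x => {w, a} ⊆ x).card
            ≤ u * k * n ^ (u - 2) := by
          refine card_biUnion_le.trans ((sum_le_card_nsmul _ _ (n ^ (u - 2)) fun a ha => ?_).trans ?_)
          · have := card_filter_superset_le n u {w, a}
            rwa [card_pair (mem_erase.1 ha).1.symm] at this
          · rw [smul_eq_mul]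
            exact Nat.mul_le_mul_right _ ((card_erase_le).trans hUc)
        have e4 := (card_le_card e2).trans ((card_union_le _ _).trans (Nat.add_le_add_left e3 _))
        have e5 : (((F y).filter fun z => w ∈ z).card : ℝ) ≤
            ((F y ∩ R.filter fun x => x ∩ U = {w}).card : ℝ) + ((u * k : ℕ) : ℝ) * (n : ℝ) ^ (u - 2) := by
          exact_mod_cast e4
        have e6 : (n : ℝ) ^ (u - 1) = n * (n : ℝ) ^ (u - 2) := by
          rw [← pow_succ']; congr 1; omega
        have e7 : 4 * ((u * k : ℕ) : ℝ) * (n : ℝ) ^ (u - 2) ≤ δ * n * (n : ℝ) ^ (u - 2) := by gcongr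
        rw [Nat.cast_pow, e6]
        rw [e6] at e1
        linarith
      · intro x hx
        obtain ⟨hxR, hxU⟩ := mem_filter.1 hx
        have hxw : w ∈ x := by
          have : w ∈ x ∩ U := by rw [hxU]; simp
          exact (mem_inter.1 this).1
        have hxi : ∀ i < m, X i ∩ x = ∅ := by
          intro i hi
          refine eq_empty_of_forall_notMem fun a ha => ?_
          rw [mem_inter] at ha
          have : a ∈ x ∩ U := mem_inter.2 ⟨ha.2, hXU i hi.le ha.1⟩
          rw [hxU, mem_singleton] at this
          exact hwX i hi (this ▸ ha.1)
        refine ⟨?_, ?_, ?_⟩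
        · intro i hi
          rw [Function.update_of_ne (by omega)]
          by_cases h : i = m
          · subst h
            rw [Function.update_self]
            refine ⟨w, Finset.ext fun a => ?_⟩
            rw [← hxU, mem_inter, mem_inter]
            constructor
            · rintro ⟨ha, ha'⟩; exact ⟨ha', hXU i le_rfl ha⟩
            · intro ha
              rw [← mem_inter, hxU, mem_singleton] at ha
              subst ha
              exact ⟨hw, hxw⟩
          · rw [Function.update_of_ne (by omega)]
            exact hP1 i (by omega)
        · intro i j hij hj
          rw [Function.update_of_ne (by omega)]
          by_cases h : j = m + 1
          · subst h
            rw [Function.update_self]; exact hxi i (by omega)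
          · rw [Function.update_of_ne h]; exact hP2 i j hij (by omega)
        · have : 1 < x.card := by rw [((hRmem x).1 hxR).2]; omega
          obtain ⟨w', hw', hne⟩ := exists_mem_ne this w
          refine ⟨w', by rw [Function.update_self]; exact hw', fun i hi h => hne ?_⟩
          rw [Function.update_of_ne (by omega)] at h
          have : w' ∈ x ∩ U := mem_inter.2 ⟨hw', hXU i (by omega) h⟩
          rwa [hxU, mem_singleton] at this
  obtain ⟨X, Y, hP, hYY, hXY, hc⟩ := hfin
  refine ⟨X, Y, hP, fun i hi y hy => ?_, ?_⟩
  · exact (mem_filter.1 (hFE y (hXY i (by omega) y hy))).2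
  · refine le_trans ?_ hc
    have e1 : (δ / 4) ^ k * n = (δ / 4) ^ (k - 1) * (δ / 4 * n) := by
      rw [← mul_assoc, ← pow_succ, Nat.sub_add_cancel (by omega)]
    rw [e1]
    gcongr

/-! ### The density bound -/

lemma zmod_val_add_one {k : ℕ} (hk : 3 ≤ k) (i : ZMod k) :
    (i + 1).val = if i.val + 1 = k then 0 else i.val + 1 := by
  have : NeZero k := ⟨by omega⟩
  have : Fact (1 < k) := ⟨by omega⟩
  have hi := ZMod.val_lt i
  rw [ZMod.val_add, ZMod.val_one]
  split_ifs with h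
  · rw [h, Nat.mod_self]
  · exact Nat.mod_eq_of_lt (by omega)

/-- The heart of the proof. Let `D` be a set of (row, column) pairs of edges of `G` such that in `D`,
within each row, each color occurs at most `n / q` times, and two rows agree in at most `n / q`
columns. If the extension is `C_k`-free then `|D| ≤ C ^ (1 / k) * n ^ (u + 1) / q ^ (1 / k)`:
otherwise the rows of `exists_rows` would have more than a constant times `n / q` common columns,
enough to realize the skeleton of a loose cycle. For `u = 1` the skeleton alternates between
sharing a row and sharing a column, which needs `k` even; for `u ≥ 2` it is a loose path of rows
whose two ends share a column. -/
lemma density_bound (u k : ℕ) (hu : 1 ≤ u) (hk : 3 ≤ k) (hke : u = 1 → Even k) :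
    ∃ C : ℝ, 0 < C ∧ ∀ (n q : ℕ) (G : Finset (Finset ℕ)) (c : Finset ℕ → ℕ)
      (D : Finset (Finset ℕ × ℕ)), 1 ≤ q → q ≤ n →
      (∀ x y, (x, y) ∈ D → x ∈ (Icc 1 n).powersetCard u ∧ y ∈ Icc 1 n ∧ insert y x ∈ G) →
      (∀ e ∈ G, c e ∉ e) →
      (∀ x p, q * ((Icc 1 n).filter fun y => (x, y) ∈ D ∧ c (insert y x) = p).card ≤ n) →
      (∀ x x', x ≠ x' → q * ((Icc 1 n).filter fun y => (x, y) ∈ D ∧ (x', y) ∈ D ∧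
        c (insert y x) = c (insert y x')).card ≤ n) →
      ¬ HasLooseCycle k (Extension G c) →
      (D.card : ℝ) ^ k * q ≤ C * ((n : ℝ) ^ (u + 1)) ^ k := by
  classical
  obtain ⟨K, hK⟩ : ∃ K : ℕ, K = (u * k + 2 * k) * (1 + k) + k ^ 2 := ⟨_, rfl⟩
  have hKpos : u * k ≤ K := by rw [hK]; nlinarith
  have huk : 1 ≤ u * k := Nat.mul_pos (by omega) (by omega)
  have hK0 : (0 : ℝ) < K := by exact_mod_cast (show 0 < K by omega)
  refine ⟨4 ^ k * K, by positivity, ?_⟩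
  intro n q G c D hq1 hqn hD hc h1 h2 hfree
  by_contra! hlt
  have hn : 1 ≤ n := by omega
  have hn' : (0 : ℝ) < n := by exact_mod_cast hn
  have hq' : (0 : ℝ) < q := by exact_mod_cast hq1
  obtain ⟨δ, hδdef⟩ : ∃ δ : ℝ, δ = D.card / (n : ℝ) ^ (u + 1) := ⟨_, rfl⟩
  have hδ : (D.card : ℝ) = δ * (n : ℝ) ^ (u + 1) := by
    rw [hδdef]; exact (div_mul_cancel₀ _ (pow_ne_zero _ hn'.ne')).symm
  have hδ0 : 0 ≤ δ := hδdef ▸ div_nonneg (Nat.cast_nonneg _) (pow_nonneg hn'.le _)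
  rw [hδ, mul_pow] at hlt
  have hlt2 : 4 ^ k * (K : ℝ) < δ ^ k * q := by
    have hp : (0 : ℝ) < ((n : ℝ) ^ (u + 1)) ^ k := by positivity
    nlinarith
  have hδ1 : δ ≤ 1 := by
    rw [hδdef, div_le_one (by positivity)]
    have e1 : D ⊆ (Icc 1 n).powersetCard u ×ˢ Icc 1 n := by
      rintro ⟨x, y⟩ h
      exact mem_product.2 ⟨(hD x y h).1, (hD x y h).2.1⟩
    have e2 := card_le_card e1
    rw [card_product, card_powersetCard, Nat.card_Icc, Nat.add_sub_cancel] at e2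
    have e3 : D.card ≤ n ^ (u + 1) := by
      rw [pow_succ]
      exact e2.trans (Nat.mul_le_mul_right _ (Nat.choose_le_pow _ _))
    exact_mod_cast e3
  have hδn : 4 * ((u * k : ℕ) : ℝ) ≤ δ * n := by
    have e1 : δ ^ k ≤ δ := pow_le_of_le_one hδ0 hδ1 (by omega)
    have e2 : δ ^ k * q ≤ δ * n := by
      have : (q : ℝ) ≤ n := by exact_mod_cast hqn
      gcongr
    have e3 : (4 : ℝ) ≤ 4 ^ k := le_self_pow₀ (by norm_num) (by omega)
    have e4 : ((u * k : ℕ) : ℝ) ≤ K := by exact_mod_cast hKpos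
    have e5 : 4 * ((u * k : ℕ) : ℝ) ≤ 4 ^ k * (K : ℝ) := by gcongr
    linarith
  obtain ⟨X, Z, hP, hXD, hZc⟩ := exists_rows hu hk hn D
    (fun x y h => ⟨(hD x y h).1, (hD x y h).2.1⟩) δ hδ hδn
  have hZ : K * n < Z.card * q := by
    have e1 : (K : ℝ) * n < Z.card * q := by
      have : (δ / 4) ^ k * n * q ≤ Z.card * q := by gcongr
      refine lt_of_lt_of_le ?_ this
      rw [div_pow]
      have : (K : ℝ) < δ ^ k / 4 ^ k * q := by
        rw [div_mul_eq_mul_div, lt_div_iff₀ (by positivity)]; linarith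
      nlinarith
    exact_mod_cast e1
  have hZn : Z.Nonempty := by
    rw [← card_pos]
    by_contra h
    have : Z.card = 0 := by omega
    rw [this] at hZ
    omega
  obtain ⟨y0, hy0⟩ := hZn
  have hXc : ∀ i < k, (X i).card = u := fun i hi =>
    (mem_powersetCard.1 (hD _ _ (hXD i hi y0 hy0)).1).2
  have hself : ∀ i < k, ∀ j < k, X i ∩ X j = ∅ → X i ≠ X j := by
    intro i hi j hj h h'
    rw [← h', inter_self] at h
    have := hXc i hi
    rw [h, card_empty] at this
    omega
  have hZI : ∀ y ∈ Z, y ∈ Icc 1 n := fun y hy => (hD _ _ (hXD 0 (by omega) y hy)).2.1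
  have : NeZero k := ⟨by omega⟩
  have hv : ∀ i : ZMod k, i.val < k := fun i => ZMod.val_lt i
  have hvi : ∀ i j : ZMod k, i ≠ j → i.val ≠ j.val := fun i j h h' => h (ZMod.val_injective k h')
  have hv1 := zmod_val_add_one hk
  have hv2 : ∀ i : ZMod k, (i + 2).val = if i.val + 1 = k then 1 else
      if i.val + 2 = k then 0 else i.val + 2 := by
    intro i
    rw [show i + 2 = i + 1 + 1 by ring, hv1, hv1]
    have := hv i
    split_ifs <;> omega
  -- everything except the shape of the skeleton
  have key : ∀ (ρ κ : ZMod k → ℕ), (∀ i, ρ i < k) → (∀ i, κ i < k) →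
      (∀ i, (κ i = κ (i + 1) ∧ X (ρ i) ≠ X (ρ (i + 1)) ∧ X (ρ i) ∩ X (ρ (i + 1)) = ∅) ∨
        (κ i ≠ κ (i + 1) ∧ ∃ w, X (ρ i) ∩ X (ρ (i + 1)) = {w})) →
      (∀ i j, j ≠ i → j ≠ i + 1 → i ≠ j + 1 → κ i ≠ κ j ∧ X (ρ i) ∩ X (ρ j) = ∅) →
      (∀ i, ¬ (κ i = κ (i + 1) ∧ κ (i + 1) = κ (i + 2)) ∧
        ∀ w, w ∈ X (ρ i) → w ∈ X (ρ (i + 1)) → w ∉ X (ρ (i + 2))) → False := by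
    intro ρ κ hρ hκ hadj hfar htri
    refine hfree (hasLooseCycle_of_skeleton hk G c (fun i => X (ρ i)) κ Z n q u hqn hκ
      (fun i => (hXc _ (hρ i)).le) (fun i y hy => (hD _ _ (hXD _ (hρ i) y hy)).2.2) hc ?_ ?_ (hK ▸ hZ)
      hadj hfar htri)
    · intro i p
      refine le_trans (Nat.mul_le_mul_left q (card_le_card ?_)) (h1 (X (ρ i)) p)
      intro y hy
      rw [mem_filter] at hy ⊢
      exact ⟨hZI y hy.1, hXD _ (hρ i) y hy.1, hy.2⟩
    · intro i j hij
      refine le_trans (Nat.mul_le_mul_left q (card_le_card ?_)) (h2 (X (ρ i)) (X (ρ j)) hij)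
      intro y hy
      rw [mem_filter] at hy ⊢
      exact ⟨hZI y hy.1, hXD _ (hρ i) y hy.1, hXD _ (hρ j) y hy.1, hy.2⟩
  by_cases hu1 : u = 1
  · -- edges `i` and `i + 1` share the row `X (i / 2)` for even `i`, and a column for odd `i`
    simp only [hu1, if_true] at hP
    have hP' : ∀ i < k, ∀ j < k, i ≠ j → X i ∩ X j = ∅ := by
      intro i hi j hj hij
      rcases lt_or_gt_of_ne hij with h | h
      · exact hP i j h (by omega)
      · rw [inter_comm]; exact hP j i h (by omega)
    obtain ⟨l, hl⟩ := hke hu1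
    refine key (fun i => i.val / 2) (fun i => if i.val + 1 = k then 0 else (i.val + 1) / 2)
      ?_ ?_ ?_ ?_ ?_
    · intro i; have := hv i; omega
    · intro i; have := hv i; split_ifs <;> omega
    · intro i
      have := hv i
      rw [hv1 i]
      by_cases hpar : i.val % 2 = 0
      · right
        have e1 : (if i.val + 1 = k then 0 else i.val + 1) / 2 = i.val / 2 := by
          split_ifs <;> omega
        refine ⟨by split_ifs <;> omega, ?_⟩
        rw [e1, inter_self]
        exact card_eq_one.1 (by rw [hXc _ (by omega), hu1])
      · left
        have e1 : X (i.val / 2) ∩ X ((if i.val + 1 = k then 0 else i.val + 1) / 2) = ∅ := by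
          apply hP' <;> (try split_ifs) <;> omega
        refine ⟨by split_ifs <;> omega, ?_, e1⟩
        exact hself _ (by omega) _ (by split_ifs <;> omega) e1
    · intro i j hji hj hi
      have a1 := hvi _ _ hji
      have a2 := hvi _ _ hj
      have a3 := hvi _ _ hi
      rw [hv1] at a2 a3
      have := hv i
      have := hv j
      refine ⟨?_, ?_⟩
      · split_ifs at a2 a3 ⊢ <;> omega
      · split_ifs at a2 a3 <;> apply hP' <;> omega
    · intro i
      have := hv i
      rw [hv1 i, hv2 i]
      refine ⟨?_, ?_⟩
      · by_cases b1 : i.val + 1 = k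
        · simp [b1, show ¬ (0 + 1 = k) by omega, show ¬ (1 + 1 = k) by omega]
        · by_cases b2 : i.val + 2 = k
          · simp only [b1, b2, if_true, if_false]; split_ifs <;> omega
          · simp only [b1, b2, if_false]; split_ifs <;> omega
      intro w w1 _ w3
      have e1 : X (i.val / 2) ∩ X ((if i.val + 1 = k then 1 else
          if i.val + 2 = k then 0 else i.val + 2) / 2) = ∅ := by
        apply hP' <;> (try split_ifs) <;> omega
      exact absurd (mem_inter.2 ⟨w1, w3⟩) (by rw [e1]; exact notMem_empty _)
  · -- edge `i` lies in the row `X i`; only the last and the first edge share a column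
    simp only [hu1, if_false] at hP
    obtain ⟨hP1, hP2, -⟩ := hP
    have hP2' : ∀ i < k, ∀ j < k, i + 1 < j ∨ j + 1 < i → X i ∩ X j = ∅ := by
      intro i hi j hj hij
      rcases hij with h | h
      · exact hP2 i j (by omega) (by omega)
      · rw [inter_comm]; exact hP2 j i (by omega) (by omega)
    refine key (fun i => i.val) (fun i => if i.val + 1 = k then 0 else i.val) hv ?_ ?_ ?_ ?_
    · intro i; have := hv i; split_ifs <;> omega
    · intro i
      have := hv i
      rw [hv1 i]
      by_cases hlast : i.val + 1 = k
      · left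
        simp only [hlast, if_true]
        have e1 : X i.val ∩ X 0 = ∅ := hP2' _ this _ (by omega) (by omega)
        refine ⟨by split_ifs <;> omega, hself _ this _ (by omega) e1, e1⟩
      · right
        simp only [hlast, if_false]
        exact ⟨by split_ifs <;> omega, hP1 _ (by omega)⟩
    · intro i j hji hj hi
      have a1 := hvi _ _ hji
      have a2 := hvi _ _ hj
      have a3 := hvi _ _ hi
      rw [hv1] at a2 a3
      have := hv i
      have := hv j
      refine ⟨?_, hP2' _ (hv i) _ (hv j) ?_⟩
      · split_ifs at a2 a3 ⊢ <;> omega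
      · split_ifs at a2 a3 <;> omega
    · intro i
      have := hv i
      rw [hv1 i, hv2 i]
      refine ⟨?_, ?_⟩
      · by_cases b1 : i.val + 1 = k
        · simp [b1, show ¬ (0 + 1 = k) by omega, show ¬ (1 + 1 = k) by omega]
        · by_cases b2 : i.val + 2 = k
          · simp only [b1, b2, if_true, if_false]; split_ifs <;> omega
          · simp only [b1, b2, if_false]; split_ifs <;> omega
      intro w w1 w2 w3
      have hno : ∀ a < k, ∀ b < k, a + 1 < b ∨ b + 1 < a → w ∈ X a → w ∉ X b := by
        intro a ha b hb hab p1 p2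
        exact absurd (mem_inter.2 ⟨p1, p2⟩) (by rw [hP2' a ha b hb hab]; exact notMem_empty _)
      by_cases hlast : i.val + 1 = k
      · simp only [hlast, if_true] at w2
        exact hno _ this 0 (by omega) (by omega) w1 w2
      · by_cases hl2 : i.val + 2 = k
        · simp only [hlast, hl2, if_true, if_false] at w2 w3
          exact hno _ (by omega) 0 (by omega) (by omega) w2 w3
        · simp only [hlast, hl2, if_false] at w3
          exact hno _ this _ (by omega) (by omega) w1 w3

/-! ### Predicting the colors of a row -/

/-- The column of an edge: its largest vertex. -/
def col (e : Finset ℕ) : ℕ := e.sup id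

/-- The row of an edge: the edge without its largest vertex. -/
def row (e : Finset ℕ) : Finset ℕ := e.erase (col e)

lemma col_insert {x : Finset ℕ} {y : ℕ} (h : ∀ a ∈ x, a < y) : col (insert y x) = y := by
  unfold col
  rw [sup_insert]
  exact sup_eq_left.2 (Finset.sup_le fun a ha => (h a ha).le)

lemma row_insert {x : Finset ℕ} {y : ℕ} (h : ∀ a ∈ x, a < y) : row (insert y x) = x := by
  unfold row
  rw [col_insert h]
  exact erase_insert fun hy => lt_irrefl _ (h y hy)

lemma col_mem {e : Finset ℕ} (he : e.Nonempty) : col e ∈ e := by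
  obtain ⟨a, ha, h⟩ := exists_mem_eq_sup e he id
  unfold col
  rw [h]
  exact ha

lemma insert_col_row {e : Finset ℕ} (he : e.Nonempty) : insert (col e) (row e) = e :=
  insert_erase (col_mem he)

lemma lt_col {e : Finset ℕ} {a : ℕ} (ha : a ∈ row e) : a < col e := by
  rw [row, mem_erase] at ha
  exact lt_of_le_of_ne (le_sup (f := id) ha.2) ha.1

lemma mem_rows {n u : ℕ} {e : Finset ℕ} (he : e ∈ (Icc 1 n).powersetCard (u + 1)) :
    e.Nonempty ∧ row e ∈ (Icc 1 n).powersetCard u ∧ col e ∈ Icc 1 n := by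
  rw [mem_powersetCard] at he
  have h1 : e.Nonempty := card_pos.1 (by omega)
  refine ⟨h1, mem_powersetCard.2 ⟨(erase_subset _ _).trans he.1, ?_⟩, he.1 (col_mem h1)⟩
  rw [row, card_erase_of_mem (col_mem h1)]
  omega

/-- The predictors used on the rows: constant colors, and copies of other rows. -/
def predictors (n u : ℕ) : Finset (ℕ ⊕ Finset ℕ) :=
  (Icc 1 n).disjSum ((Icc 1 n).powersetCard u)

/-- The color that a predictor announces for the edge with row `x` and column `y`. A copy of the
row `x'` announces the color of `insert y x'`; it is silent (value `0`, which is never a color)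
unless `x'` comes before `x` in the fixed enumeration of finite sets and `x'` is really the row of
`insert y x'`. So a prediction on a row only uses the colors of edges in earlier rows. -/
def predict (c : Finset ℕ → ℕ) (x : Finset ℕ) : ℕ ⊕ Finset ℕ → ℕ → ℕ
  | Sum.inl p, _ => p
  | Sum.inr x', y =>
    if Encodable.encode x' < Encodable.encode x ∧ ∀ a ∈ x', a < y then c (insert y x') else 0

/-- The edges of `G` whose color is announced by none of the first `i` predictors that `s`
selects for their row. -/
def uncovered (G : Finset (Finset ℕ)) (c : Finset ℕ → ℕ) (s : Finset ℕ → ℕ → ℕ ⊕ Finset ℕ)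
    (i : ℕ) : Finset (Finset ℕ) :=
  G.filter fun e => ∀ j < i, c e ≠ predict c (row e) (s (row e) j) (col e)

/-- In a `C_k`-free instance the predictors can be selected so that the number of edges surviving
the first `i` of them is at most a constant times `n^(u+1) / (i+1)^(1/k)`. -/
lemma exists_predictors (u k : ℕ) (hu : 1 ≤ u) (hk : 3 ≤ k) (hke : u = 1 → Even k) :
    ∃ C : ℝ, 0 < C ∧ ∀ (n : ℕ) (G : Finset (Finset ℕ)) (c : Finset ℕ → ℕ), 1 ≤ n →
      G ⊆ (Icc 1 n).powersetCard (u + 1) → (∀ e ∈ G, c e ∈ Icc 1 n ∧ c e ∉ e) →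
      ¬ HasLooseCycle k (Extension G c) →
      ∃ s : Finset ℕ → ℕ → ℕ ⊕ Finset ℕ, (∀ x i, s x i ∈ predictors n u) ∧
        ∀ i, i + 1 ≤ n →
          ((uncovered G c s i).card : ℝ) ^ k * ((i + 1 : ℕ) : ℝ) ≤ C * ((n : ℝ) ^ (u + 1)) ^ k := by
  classical
  obtain ⟨C, hC, hd⟩ := density_bound u k hu hk hke
  refine ⟨C, hC, fun n G c hn hG hc hfree => ?_⟩
  have hne : (predictors n u).Nonempty :=
    ⟨Sum.inl 1, inl_mem_disjSum.2 (mem_Icc.2 ⟨le_rfl, hn⟩)⟩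
  -- the columns occupied in the row `x`
  let N : Finset ℕ → Finset ℕ := fun x =>
    (Icc 1 n).filter fun y => (∀ a ∈ x, a < y) ∧ insert y x ∈ G
  let A : Finset ℕ → ℕ ⊕ Finset ℕ → Finset ℕ := fun x t =>
    (Icc 1 n).filter fun y => c (insert y x) = predict c x t y
  choose s hs1 hs2 using fun x => exists_greedy (predictors n u) hne (A x) (N x)
  refine ⟨s, hs1, fun i hi => ?_⟩
  have hNn : ∀ x, (N x).card ≤ n := fun x => by
    refine (card_filter_le _ _).trans ?_
    rw [Nat.card_Icc]; omega
  let D : Finset (Finset ℕ × ℕ) := (uncovered G c s i).image fun e => (row e, col e)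
  have hD : ∀ x y, (x, y) ∈ D → (x ∈ (Icc 1 n).powersetCard u ∧ y ∈ Icc 1 n ∧ insert y x ∈ G) ∧
      (∀ a ∈ x, a < y) ∧ y ∈ N x \ (range i).biUnion fun j => A x (s x j) := by
    intro x y h
    obtain ⟨e, he, hxy⟩ := mem_image.1 h
    rw [Prod.mk.injEq] at hxy
    obtain ⟨rfl, rfl⟩ := hxy
    obtain ⟨heG, heu⟩ := mem_filter.1 he
    obtain ⟨e1, e2, e3⟩ := mem_rows (hG heG)
    have e4 : insert (col e) (row e) ∈ G := by rwa [insert_col_row e1]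
    refine ⟨⟨e2, e3, e4⟩, fun a => lt_col, mem_sdiff.2 ⟨?_, ?_⟩⟩
    · exact mem_filter.2 ⟨e3, fun a => lt_col, e4⟩
    · intro hbad
      obtain ⟨j, hj, hj'⟩ := mem_biUnion.1 hbad
      refine heu j (mem_range.1 hj) ?_
      have := (mem_filter.1 hj').2
      rwa [insert_col_row e1] at this
  have hDc : D.card = (uncovered G c s i).card := by
    refine card_image_of_injOn fun e he e' he' h => ?_
    rw [Prod.mk.injEq] at h
    have e1 := (mem_rows (hG (mem_filter.1 he).1)).1
    have e2 := (mem_rows (hG (mem_filter.1 he').1)).1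
    rw [← insert_col_row e1, ← insert_col_row e2, h.1, h.2]
  rw [← hDc]
  -- any set of uncovered columns on which one predictor is right is small
  have hsmall : ∀ x t (Y : Finset ℕ), t ∈ predictors n u →
      (∀ y ∈ Y, (x, y) ∈ D ∧ c (insert y x) = predict c x t y) → (i + 1) * Y.card ≤ n := by
    intro x t Y ht hY
    refine le_trans (Nat.mul_le_mul_left _ (card_le_card ?_)) ((hs2 x i t ht).trans (hNn x))
    intro y hy
    obtain ⟨h1, h2⟩ := hY y hy
    obtain ⟨h3, -, h4⟩ := hD x y h1
    exact mem_inter.2 ⟨h4, mem_filter.2 ⟨h3.2.1, h2⟩⟩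
  refine hd n (i + 1) G c D (by omega) hi (fun x y h => (hD x y h).1) (fun e he => (hc e he).2)
    ?_ ?_ hfree
  · intro x p
    by_cases hp : p ∈ Icc 1 n
    · refine hsmall x (Sum.inl p) _ (inl_mem_disjSum.2 hp) fun y hy => ?_
      exact (mem_filter.1 hy).2
    · rw [filter_false_of_mem, card_empty, mul_zero]
      · exact Nat.zero_le _
      · rintro y - ⟨h1, h2⟩
        exact hp (h2 ▸ (hc _ (hD x y h1).1.2.2).1)
  · -- of two distinct rows, the earlier one is a predictor for the later one
    have hmain : ∀ x x', Encodable.encode x' < Encodable.encode x → (i + 1) *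
        ((Icc 1 n).filter fun y => (x, y) ∈ D ∧ (x', y) ∈ D ∧
          c (insert y x) = c (insert y x')).card ≤ n := by
      intro x x' hlt
      by_cases hx' : x' ∈ (Icc 1 n).powersetCard u
      · refine hsmall x (Sum.inr x') _ (inr_mem_disjSum.2 hx') fun y hy => ?_
        obtain ⟨-, h1, h2, h3⟩ := mem_filter.1 hy
        refine ⟨h1, ?_⟩
        rw [predict, if_pos ⟨hlt, (hD x' y h2).2.1⟩, h3]
      · rw [filter_false_of_mem, card_empty, mul_zero]
        · exact Nat.zero_le _
        · rintro y - ⟨-, h2, -⟩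
          exact hx' (hD x' y h2).1.1
    intro x x' hxx
    rcases lt_trichotomy (Encodable.encode x') (Encodable.encode x) with h | h | h
    · exact hmain x x' h
    · exact absurd (Encodable.encode_injective h).symm hxx
    · refine le_trans (le_of_eq ?_) (hmain x' x h)
      congr 2
      ext y
      simp only [mem_filter]
      constructor
      · rintro ⟨a, b, c, d⟩; exact ⟨a, c, b, d.symm⟩
      · rintro ⟨a, b, c, d⟩; exact ⟨a, c, b, d.symm⟩

/-! ### The code of a colored hypergraph -/

/-- The letters of the code word: a blank, the position of a predictor, or an explicit color. -/
abbrev Letter (M n : ℕ) : Type := Option (Fin M ⊕ Fin (n + 1))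

/-- The letter truthfully describes the status of the (potential) edge `e`. -/
def Reads {M n : ℕ} (G : Finset (Finset ℕ)) (c : Finset ℕ → ℕ)
    (s : Finset ℕ → ℕ → ℕ ⊕ Finset ℕ) (e : Finset ℕ) : Letter M n → Prop
  | none => e ∉ G
  | some (Sum.inl i) => e ∈ G ∧ c e = predict c (row e) (s (row e) i) (col e)
  | some (Sum.inr p) => e ∈ G ∧ c e = p

/-- The length of a letter, up to constants its number of bits: logarithmic in the position of the
predictor, and `J + 1 ≈ (log n) / 2` for an explicit color. -/
def cost {M n : ℕ} (J : ℕ) : Letter M n → ℕ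
  | none => 0
  | some (Sum.inl i) => Nat.log 2 (i + 1)
  | some (Sum.inr _) => J + 1

/-- The selected predictors and the letters determine the colored hypergraph: colors are recovered
row by row in the order of the enumeration of finite sets, as a prediction only refers to earlier
rows. -/
lemma reads_injective {n u M : ℕ} {G G' : Finset (Finset ℕ)} {c c' : Finset ℕ → ℕ}
    {s s' : Finset ℕ → ℕ → ℕ ⊕ Finset ℕ} {σ : Finset ℕ → Letter M n}
    (hG : G ⊆ (Icc 1 n).powersetCard (u + 1)) (hG' : G' ⊆ (Icc 1 n).powersetCard (u + 1))
    (hc : ∀ e ∉ G, c e = 0) (hc' : ∀ e ∉ G', c' e = 0)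
    (hs : ∀ x ∈ (Icc 1 n).powersetCard u, ∀ i < M, s x i = s' x i)
    (h : ∀ e ∈ (Icc 1 n).powersetCard (u + 1), Reads G c s e (σ e))
    (h' : ∀ e ∈ (Icc 1 n).powersetCard (u + 1), Reads G' c' s' e (σ e)) :
    G = G' ∧ c = c' := by
  have hGG : G = G' := by
    ext e
    by_cases he : e ∈ (Icc 1 n).powersetCard (u + 1)
    · have a := h e he
      have b := h' e he
      generalize σ e = t at a b
      rcases t with _ | (i | p)
      · exact iff_of_false a b
      · exact iff_of_true a.1 b.1
      · exact iff_of_true a.1 b.1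
    · exact iff_of_false (fun x => he (hG x)) (fun x => he (hG' x))
  refine ⟨hGG, ?_⟩
  have key : ∀ m, ∀ e, Encodable.encode (row e) = m → c e = c' e := by
    intro m
    induction m using Nat.strong_induction_on with
    | _ m ih =>
      intro e hem
      by_cases heG : e ∈ G
      · have he := hG heG
        have a := h e he
        have b := h' e he
        generalize σ e = t at a b
        rcases t with _ | (i | p)
        · exact absurd heG a
        · rw [a.2, b.2, ← hs _ (mem_rows he).2.1 i i.2]
          rcases s (row e) i with p | x'
          · rfl
          · rw [predict, predict]
            split_ifs with hif
            · exact ih _ (by rw [row_insert hif.2, ← hem]; exact hif.1) _ rfl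
            · rfl
        · rw [a.2, b.2]
      · rw [hc e heG, hc' e (hGG ▸ heG)]
  funext e
  exact key _ e rfl

/-- Every edge has a truthful letter whose length is paid for by the levels at which it is uncovered. -/
lemma exists_letter {n J : ℕ} (G : Finset (Finset ℕ)) (c : Finset ℕ → ℕ)
    (s : Finset ℕ → ℕ → ℕ ⊕ Finset ℕ) (hc : ∀ e ∈ G, c e ≤ n) (e : Finset ℕ) :
    ∃ a : Letter (2 ^ J) n, Reads G c s e a ∧ cost J a ≤
      (∑ j ∈ Icc 1 J, if e ∈ uncovered G c s (2 ^ j - 1) then 1 else 0) +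
        (J + 1) * if e ∈ uncovered G c s (2 ^ J - 1) then 1 else 0 := by
  classical
  by_cases heG : e ∈ G
  · by_cases hcov : ∃ i, i < 2 ^ J ∧ c e = predict c (row e) (s (row e) i) (col e)
    · obtain ⟨hi, hi'⟩ := Nat.find_spec hcov
      have hmin : ∀ j < Nat.find hcov, c e ≠ predict c (row e) (s (row e) j) (col e) :=
        fun j hj hj' => Nat.find_min hcov hj ⟨hj.trans hi, hj'⟩
      generalize Nat.find hcov = i at hi hi' hmin
      refine ⟨some (Sum.inl ⟨i, hi⟩), ⟨heG, hi'⟩, le_trans ?_ (Nat.le_add_right _ _)⟩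
      have hlog : Nat.log 2 (i + 1) ≤ J :=
        (Nat.log_mono_right hi).trans (Nat.log_pow (by norm_num) J).le
      calc cost J (some (Sum.inl ⟨i, hi⟩) : Letter (2 ^ J) n)
          = ∑ j ∈ Icc 1 (Nat.log 2 (i + 1)), 1 := by simp [cost]
        _ = ∑ j ∈ Icc 1 (Nat.log 2 (i + 1)),
              if e ∈ uncovered G c s (2 ^ j - 1) then 1 else 0 := by
            refine sum_congr rfl fun j hj => (if_pos ?_).symm
            have h1 : 2 ^ j ≤ i + 1 :=
              Nat.pow_le_of_le_log (by omega) (mem_Icc.1 hj).2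
            exact mem_filter.2 ⟨heG, fun l hl => hmin l (by omega)⟩
        _ ≤ _ := sum_le_sum_of_subset (Icc_subset_Icc_right hlog)
    · refine ⟨some (Sum.inr ⟨c e, Nat.lt_succ_of_le (hc e heG)⟩), ⟨heG, rfl⟩,
        le_trans ?_ (Nat.le_add_left _ _)⟩
      rw [if_pos]
      · simp [cost]
      · exact mem_filter.2 ⟨heG, fun l hl h => hcov ⟨l, by omega, h⟩⟩
  · exact ⟨none, heG, Nat.zero_le _⟩

/-! ### Counting the codes -/

/-- The Kraft sum of the letters is bounded: the `i`-th predictor contributes about `4 / i ^ 2`, and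
the `n + 1` explicit colors together at most `(n + 1) / 4 ^ (J + 1) ≤ 1`. -/
lemma sum_kraft {n J : ℕ} (hn : n < 4 ^ (J + 1)) :
    ∑ a : Letter (2 ^ J) n, (1 / 4 : ℝ) ^ cost J a ≤ 8 := by
  rw [Fintype.sum_option, Fintype.sum_sum_type]
  have h1 : ∀ m : ℕ, ∑ i ∈ range m, (4 : ℝ) / ((i : ℝ) + 2) ^ 2 ≤ 4 - 4 / ((m : ℝ) + 1) := by
    intro m
    induction m with
    | zero => norm_num
    | succ m ih =>
      rw [sum_range_succ]
      have e1 : (4 : ℝ) / ((m : ℝ) + 2) ^ 2 ≤ 4 / (m + 1) - 4 / (m + 2) := by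
        rw [div_sub_div _ _ (by positivity) (by positivity),
          div_le_div_iff₀ (by positivity) (by positivity)]
        have : (0 : ℝ) ≤ m := Nat.cast_nonneg m
        nlinarith
      have e2 : ((m + 1 : ℕ) : ℝ) + 1 = m + 2 := by push_cast; ring
      rw [e2]
      linarith
  have h2 : ∑ i : Fin (2 ^ J), (1 / 4 : ℝ) ^ cost J (some (Sum.inl i) : Letter (2 ^ J) n) ≤ 4 := by
    have e1 : ∀ i : ℕ, (1 / 4 : ℝ) ^ Nat.log 2 (i + 1) ≤ 4 / ((i : ℝ) + 2) ^ 2 := by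
      intro i
      have e2 : i + 2 ≤ 2 ^ (Nat.log 2 (i + 1) + 1) :=
        Nat.lt_pow_succ_log_self (by norm_num) (i + 1)
      have e3 : (i : ℝ) + 2 ≤ 2 ^ (Nat.log 2 (i + 1) + 1) := by exact_mod_cast e2
      rw [one_div, inv_pow, le_div_iff₀ (by positivity), inv_mul_le_iff₀ (by positivity)]
      calc ((i : ℝ) + 2) ^ 2 ≤ (2 ^ (Nat.log 2 (i + 1) + 1)) ^ 2 := by gcongr
        _ = 4 ^ Nat.log 2 (i + 1) * 4 := by
          rw [← pow_mul, mul_comm, pow_mul, pow_succ]; norm_num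
    calc ∑ i : Fin (2 ^ J), (1 / 4 : ℝ) ^ cost J (some (Sum.inl i) : Letter (2 ^ J) n)
        = ∑ i ∈ range (2 ^ J), (1 / 4 : ℝ) ^ Nat.log 2 (i + 1) :=
          Fin.sum_univ_eq_sum_range (fun i => (1 / 4 : ℝ) ^ Nat.log 2 (i + 1)) _
      _ ≤ ∑ i ∈ range (2 ^ J), (4 : ℝ) / ((i : ℝ) + 2) ^ 2 := sum_le_sum fun i _ => e1 i
      _ ≤ _ := h1 _
      _ ≤ 4 := by
        have : (0 : ℝ) ≤ 4 / (((2 ^ J : ℕ) : ℝ) + 1) := by positivity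
        linarith
  have h3 : ∑ p : Fin (n + 1), (1 / 4 : ℝ) ^ cost J (some (Sum.inr p) : Letter (2 ^ J) n) ≤ 1 := by
    have e1 : ((n + 1 : ℕ) : ℝ) ≤ 4 ^ (J + 1) := by exact_mod_cast hn
    simp only [cost, sum_const, card_univ, Fintype.card_fin, nsmul_eq_mul]
    rw [one_div, inv_pow, mul_inv_le_iff₀ (by positivity), one_mul]
    exact e1
  have h4 : (1 / 4 : ℝ) ^ cost J (none : Letter (2 ^ J) n) = 1 := by simp [cost]
  rw [h4]
  linarith

lemma geom_le {θ : ℝ} (h0 : 0 ≤ θ) (h1 : θ < 1) (m : ℕ) :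
    ∑ j ∈ range m, θ ^ j ≤ 1 / (1 - θ) := by
  rw [le_div_iff₀ (by linarith), geom_sum_mul_neg]
  have : 0 ≤ θ ^ m := by positivity
  linarith

/-- The total length of the code word is linear in the number of potential edges: level `j` is
charged by the edges uncovered after `2 ^ j - 1` predictors, and by `exists_predictors` their
number decays geometrically in `j`. -/
lemma exists_total_cost (u k : ℕ) (hu : 1 ≤ u) (hk : 3 ≤ k) (hke : u = 1 → Even k) :
    ∃ B : ℕ, ∀ (n J : ℕ) (G : Finset (Finset ℕ)) (c : Finset ℕ → ℕ), 4 ^ J ≤ n →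
      G ⊆ (Icc 1 n).powersetCard (u + 1) → (∀ e ∈ G, c e ∈ Icc 1 n ∧ c e ∉ e) →
      ¬ HasLooseCycle k (Extension G c) →
      ∃ (s : Finset ℕ → ℕ → ℕ ⊕ Finset ℕ) (σ : Finset ℕ → Letter (2 ^ J) n),
        (∀ x i, s x i ∈ predictors n u) ∧ (∀ e, Reads G c s e (σ e)) ∧
        ∑ e ∈ (Icc 1 n).powersetCard (u + 1), cost J (σ e) ≤ B * n ^ (u + 1) := by
  classical
  obtain ⟨C, hC, hp⟩ := exists_predictors u k hu hk hke
  obtain ⟨K, hKdef⟩ : ∃ K : ℝ, K = max C 1 := ⟨_, rfl⟩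
  have hK1 : 1 ≤ K := hKdef ▸ le_max_right _ _
  have hKC : C ≤ K := hKdef ▸ le_max_left _ _
  -- the ratio of the geometric series, chosen so that its `k`-th power is at least `1 / 2`
  obtain ⟨θ, hθdef⟩ : ∃ θ : ℝ, θ = 1 - 1 / (2 * k) := ⟨_, rfl⟩
  have hk' : (3 : ℝ) ≤ k := by exact_mod_cast hk
  have hθ1 : θ < 1 := by
    have : 0 < 1 / (2 * (k : ℝ)) := by positivity
    linarith
  have hθ0 : 0 ≤ θ := by
    have : 1 / (2 * (k : ℝ)) ≤ 1 := by rw [div_le_one (by positivity)]; linarith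
    linarith
  have hθk : 1 / 2 ≤ θ ^ k := by
    have h1 := one_add_mul_le_pow (a := -(1 / (2 * (k : ℝ)))) (by linarith) k
    have h2 : 1 + (k : ℝ) * -(1 / (2 * (k : ℝ))) = 1 / 2 := by field_simp; norm_num
    rw [h2] at h1
    rwa [hθdef, sub_eq_add_neg]
  refine ⟨⌈2 * K / (1 - θ)⌉₊, fun n J G c hJn hG hc hfree => ?_⟩
  have hn : 1 ≤ n := (Nat.one_le_pow _ _ (by norm_num)).trans hJn
  have h2J : 2 ^ J ≤ n := (Nat.pow_le_pow_left (by norm_num) J).trans hJn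
  obtain ⟨s, hs, hunc⟩ := hp n G c hn hG hc hfree
  choose σ hσ hσc using exists_letter (n := n) (J := J) G c s (fun e he => (mem_Icc.1 (hc e he).1).2)
  refine ⟨s, σ, hs, hσ, ?_⟩
  obtain ⟨N, hN⟩ : ∃ N : ℝ, N = (n : ℝ) ^ (u + 1) := ⟨_, rfl⟩
  have hN0 : 0 ≤ N := by rw [hN]; positivity
  have hU : ∀ j ≤ J, ((uncovered G c s (2 ^ j - 1)).card : ℝ) ≤ K * θ ^ j * N := by
    intro j hj
    have h1 : 2 ^ j - 1 + 1 = 2 ^ j := Nat.sub_add_cancel (Nat.one_le_pow _ _ (by norm_num))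
    have h2 := hunc (2 ^ j - 1)
    rw [h1] at h2
    have h3 := h2 ((Nat.pow_le_pow_right (by norm_num) hj).trans h2J)
    rw [← hN] at h3
    push_cast at h3
    refine le_of_pow_le_pow_left₀ (show k ≠ 0 by omega) (by positivity) ?_
    have h4 : C ≤ K ^ k := hKC.trans (le_self_pow₀ hK1 (by omega))
    have h5 : 1 ≤ (θ ^ k) ^ j * 2 ^ j := by
      rw [← mul_pow]
      exact one_le_pow₀ (by linarith)
    have hpos : (0 : ℝ) < 2 ^ j := by positivity
    refine le_of_mul_le_mul_right ?_ hpos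
    calc _ ≤ C * N ^ k := h3
      _ ≤ K ^ k * N ^ k * 1 := by rw [mul_one]; gcongr
      _ ≤ K ^ k * N ^ k * ((θ ^ k) ^ j * 2 ^ j) := by gcongr
      _ = (K * θ ^ j * N) ^ k * 2 ^ j := by
        rw [mul_pow, mul_pow, ← pow_mul, ← pow_mul, mul_comm k j]; ring
  have hsum : ∑ e ∈ (Icc 1 n).powersetCard (u + 1), cost J (σ e) ≤
      ∑ j ∈ Icc 1 J, (uncovered G c s (2 ^ j - 1)).card +
        (J + 1) * (uncovered G c s (2 ^ J - 1)).card := by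
    have hind : ∀ i, ∑ e ∈ (Icc 1 n).powersetCard (u + 1),
        (if e ∈ uncovered G c s i then 1 else 0) ≤ (uncovered G c s i).card := by
      intro i
      rw [sum_boole, Nat.cast_id]
      exact card_le_card fun e he => (mem_filter.1 he).2
    refine (sum_le_sum fun e _ => hσc e).trans ?_
    rw [sum_add_distrib, sum_comm, ← mul_sum]
    exact Nat.add_le_add (sum_le_sum fun j _ => hind _) (Nat.mul_le_mul_left _ (hind _))
  have hreal : ((∑ e ∈ (Icc 1 n).powersetCard (u + 1), cost J (σ e) : ℕ) : ℝ)
      ≤ (⌈2 * K / (1 - θ)⌉₊ : ℝ) * N := by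
    have e1 : ∑ j ∈ Icc 1 J, ((uncovered G c s (2 ^ j - 1)).card : ℝ) ≤ K / (1 - θ) * N := by
      calc ∑ j ∈ Icc 1 J, ((uncovered G c s (2 ^ j - 1)).card : ℝ)
          ≤ ∑ j ∈ Icc 1 J, K * θ ^ j * N := sum_le_sum fun j hj => hU j (mem_Icc.1 hj).2
        _ ≤ ∑ j ∈ range (J + 1), K * θ ^ j * N := by
          refine sum_le_sum_of_subset_of_nonneg ?_ fun j _ _ => by positivity
          intro j hj
          have := mem_Icc.1 hj
          exact mem_range.2 (by omega)
        _ = K * (∑ j ∈ range (J + 1), θ ^ j) * N := by rw [← sum_mul, ← mul_sum]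
        _ ≤ K * (1 / (1 - θ)) * N := by gcongr; exact geom_le hθ0 hθ1 _
        _ = _ := by ring
    have e2 : ((J : ℝ) + 1) * ((uncovered G c s (2 ^ J - 1)).card : ℝ) ≤ K / (1 - θ) * N := by
      have e3 : ((J : ℝ) + 1) * θ ^ J ≤ 1 / (1 - θ) := by
        refine le_trans ?_ (geom_le hθ0 hθ1 (J + 1))
        have := card_nsmul_le_sum (range (J + 1)) (fun j => θ ^ j) (θ ^ J) fun j hj =>
          pow_le_pow_of_le_one hθ0 hθ1.le (by have := mem_range.1 hj; omega)
        rw [card_range, nsmul_eq_mul] at this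
        push_cast at this
        exact this
      calc ((J : ℝ) + 1) * ((uncovered G c s (2 ^ J - 1)).card : ℝ)
          ≤ ((J : ℝ) + 1) * (K * θ ^ J * N) := by gcongr; exact hU J le_rfl
        _ = K * (((J : ℝ) + 1) * θ ^ J) * N := by ring
        _ ≤ K * (1 / (1 - θ)) * N := by gcongr
        _ = _ := by ring
    have e4 : ((∑ e ∈ (Icc 1 n).powersetCard (u + 1), cost J (σ e) : ℕ) : ℝ) ≤
        ∑ j ∈ Icc 1 J, ((uncovered G c s (2 ^ j - 1)).card : ℝ) +
          ((J : ℝ) + 1) * ((uncovered G c s (2 ^ J - 1)).card : ℝ) := by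
      exact_mod_cast hsum
    have e5 : 2 * K / (1 - θ) * N ≤ (⌈2 * K / (1 - θ)⌉₊ : ℝ) * N := by
      gcongr
      exact Nat.le_ceil _
    have e6 : K / (1 - θ) * N + K / (1 - θ) * N = 2 * K / (1 - θ) * N := by ring
    linarith
  rw [hN] at hreal
  exact_mod_cast hreal

/-- The number of ways to select `2 ^ J ≈ √n` predictors for all rows. There are at most
`n ^ u` rows and a predictor takes `O(log n)` bits, so only `√n * log n = O(n)` is needed. -/
lemma card_selections {n u J : ℕ} (hu : 1 ≤ u) (hn : 2 ≤ n) (hJ : 4 ^ J ≤ n)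
    (hJ' : n < 4 ^ (J + 1)) :
    Fintype.card (↥((Icc 1 n).powersetCard u) → Fin (2 ^ J) → ↥(predictors n u))
      ≤ 2 ^ (2 * (u + 1) * n ^ (u + 1)) := by
  have hrows : ((Icc 1 n).powersetCard u).card ≤ n ^ u := by
    rw [card_powersetCard, Nat.card_Icc, Nat.add_sub_cancel]
    exact Nat.choose_le_pow _ _
  have hpred : (predictors n u).card ≤ 2 ^ (2 * (J + 1) * (u + 1)) := by
    have e1 : n ≤ n ^ u := Nat.le_self_pow (by omega) n
    calc (predictors n u).card ≤ n ^ u + n ^ u := by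
          rw [predictors, card_disjSum, Nat.card_Icc]; omega
      _ ≤ n ^ u * n := by nlinarith
      _ = n ^ (u + 1) := (pow_succ _ _).symm
      _ ≤ (4 ^ (J + 1)) ^ (u + 1) := Nat.pow_le_pow_left hJ'.le _
      _ = 2 ^ (2 * (J + 1) * (u + 1)) := by
        rw [show 4 = 2 ^ 2 by norm_num, ← pow_mul, ← pow_mul, mul_assoc]
  have hJ2 : J + 1 ≤ 2 ^ J := Nat.lt_two_pow_self
  have hexp : 2 * (J + 1) * (u + 1) * (2 ^ J * n ^ u) ≤ 2 * (u + 1) * n ^ (u + 1) := by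
    calc 2 * (J + 1) * (u + 1) * (2 ^ J * n ^ u)
        = 2 * (u + 1) * (((J + 1) * 2 ^ J) * n ^ u) := by ring
      _ ≤ 2 * (u + 1) * ((2 ^ J * 2 ^ J) * n ^ u) := by gcongr
      _ = 2 * (u + 1) * (4 ^ J * n ^ u) := by rw [← mul_pow, show 2 * 2 = 4 by norm_num]
      _ ≤ 2 * (u + 1) * (n * n ^ u) := by gcongr
      _ = _ := by rw [pow_succ]; ring
  rw [Fintype.card_fun, Fintype.card_fun, Fintype.card_fin, Fintype.card_coe, Fintype.card_coe,
    ← pow_mul]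
  calc (predictors n u).card ^ (2 ^ J * ((Icc 1 n).powersetCard u).card)
      ≤ (2 ^ (2 * (J + 1) * (u + 1))) ^ (2 ^ J * ((Icc 1 n).powersetCard u).card) :=
        Nat.pow_le_pow_left hpred _
    _ ≤ (2 ^ (2 * (J + 1) * (u + 1))) ^ (2 ^ J * n ^ u) :=
        Nat.pow_le_pow_right (by positivity) (Nat.mul_le_mul_left _ hrows)
    _ = 2 ^ (2 * (J + 1) * (u + 1) * (2 ^ J * n ^ u)) := (pow_mul _ _ _).symm
    _ ≤ _ := Nat.pow_le_pow_right (by norm_num) hexp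

/-- The counting bound, without the logarithmic factor: the code is injective and the number of
possible codes is a selection count times a Kraft bound. -/
lemma exists_count_bound (u k : ℕ) (hu : 1 ≤ u) (hk : 3 ≤ k) (hke : u = 1 → Even k) :
    ∃ B : ℕ, 0 < B ∧ ∀ n : ℕ, 2 ≤ n →
      (({p : Finset (Finset ℕ) × (Finset ℕ → ℕ) |
          p.1 ⊆ (Icc 1 n).powersetCard (u + 1) ∧
          (∀ e ∈ p.1, p.2 e ∈ Icc 1 n ∧ p.2 e ∉ e) ∧
          (∀ e ∉ p.1, p.2 e = 0) ∧
          ¬ HasLooseCycle k (Extension p.1 p.2)} : Set _).ncard : ℝ)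
        ≤ (2 : ℝ) ^ (B * n ^ (u + 1)) := by
  classical
  obtain ⟨B, hB⟩ := exists_total_cost u k hu hk hke
  refine ⟨2 * (u + 1) + (2 * B + 3), by omega, fun n hn => ?_⟩
  set P : Set (Finset (Finset ℕ) × (Finset ℕ → ℕ)) := {p |
          p.1 ⊆ (Icc 1 n).powersetCard (u + 1) ∧
          (∀ e ∈ p.1, p.2 e ∈ Icc 1 n ∧ p.2 e ∉ e) ∧
          (∀ e ∉ p.1, p.2 e = 0) ∧
          ¬ HasLooseCycle k (Extension p.1 p.2)} with hP
  -- the number of levels is half of `log n`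
  obtain ⟨J, hJdef⟩ : ∃ J, J = Nat.log 4 n := ⟨_, rfl⟩
  have hJ : 4 ^ J ≤ n := hJdef ▸ Nat.pow_log_le_self 4 (by omega)
  have hJ' : n < 4 ^ (J + 1) := hJdef ▸ Nat.lt_pow_succ_log_self (by norm_num) n
  have hcode : ∀ p : P, ∃ (s : Finset ℕ → ℕ → ℕ ⊕ Finset ℕ) (σ : Finset ℕ → Letter (2 ^ J) n),
        (∀ x i, s x i ∈ predictors n u) ∧ (∀ e, Reads p.1.1 p.1.2 s e (σ e)) ∧
        ∑ e ∈ (Icc 1 n).powersetCard (u + 1), cost J (σ e) ≤ B * n ^ (u + 1) :=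
    fun p => hB n J p.1.1 p.1.2 hJ p.2.1 p.2.2.1 p.2.2.2.2
  choose s σ hs hσ hcost using hcode
  let T : Finset ((↥((Icc 1 n).powersetCard u) → Fin (2 ^ J) → ↥(predictors n u)) ×
      (↥((Icc 1 n).powersetCard (u + 1)) → Letter (2 ^ J) n)) :=
    univ ×ˢ univ.filter fun τ => ∑ e, cost J (τ e) ≤ B * n ^ (u + 1)
  let f : P → _ × _ := fun p => ((fun x i => ⟨s p x i, hs p x i⟩ :
      ↥((Icc 1 n).powersetCard u) → Fin (2 ^ J) → ↥(predictors n u)),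
    (fun e => σ p e : ↥((Icc 1 n).powersetCard (u + 1)) → Letter (2 ^ J) n))
  have hfT : ∀ p, f p ∈ T := by
    intro p
    refine mem_product.2 ⟨mem_univ _, mem_filter.2 ⟨mem_univ _, ?_⟩⟩
    refine le_trans (le_of_eq ?_) (hcost p)
    exact sum_coe_sort ((Icc 1 n).powersetCard (u + 1)) fun e => cost J (σ p e)
  have hfinj : Function.Injective f := by
    intro p p' hpp
    rw [Prod.mk.injEq] at hpp
    obtain ⟨h1, h2⟩ := hpp
    have h3 : ∀ e ∈ (Icc 1 n).powersetCard (u + 1), σ p e = σ p' e := fun e he =>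
      congrFun h2 ⟨e, he⟩
    have h4 : ∀ x ∈ (Icc 1 n).powersetCard u, ∀ i < 2 ^ J, s p x i = s p' x i := fun x hx i hi =>
      congrArg Subtype.val (congrFun (congrFun h1 ⟨x, hx⟩) ⟨i, hi⟩)
    have h5 := reads_injective p.2.1 p'.2.1 p.2.2.2.1 p'.2.2.2.1 h4 (σ := σ p)
      (fun e _ => hσ p e) (fun e he => by rw [h3 e he]; exact hσ p' e)
    exact Subtype.ext (Prod.ext h5.1 h5.2)
  have hcard : P.ncard ≤ T.card := by
    rw [← Nat.card_coe_set_eq]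
    have := Nat.card_le_card_of_injective (fun p => (⟨f p, hfT p⟩ : T))
      (fun p p' h => hfinj (congrArg Subtype.val h))
    rwa [Nat.card_eq_fintype_card (α := T), Fintype.card_coe] at this
  have hE : Fintype.card ↥((Icc 1 n).powersetCard (u + 1)) ≤ n ^ (u + 1) := by
    rw [Fintype.card_coe, card_powersetCard, Nat.card_Icc, Nat.add_sub_cancel]
    exact Nat.choose_le_pow _ _
  have hT : (T.card : ℝ) ≤ 2 ^ (2 * (u + 1) * n ^ (u + 1)) *
      (4 ^ (B * n ^ (u + 1)) * 8 ^ (n ^ (u + 1))) := by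
    rw [card_product, card_univ, Nat.cast_mul]
    refine mul_le_mul (by exact_mod_cast card_selections hu hn hJ hJ') ?_ (by positivity)
      (by positivity)
    refine (card_weighted_le (cost J) 8 (sum_kraft hJ') (B * n ^ (u + 1))).trans ?_
    gcongr
    norm_num
  refine le_trans (by exact_mod_cast hcard) (hT.trans (le_of_eq ?_))
  rw [show (4 : ℝ) = 2 ^ 2 by norm_num, show (8 : ℝ) = 2 ^ 3 by norm_num, ← pow_mul, ← pow_mul,
    ← pow_add, ← pow_add]
  congr 1
  ring

end LooseCount

/-- For `r ≥ 3`, `k ≥ 3` (with `k` even if `r = 3`) there is `C > 0` such that for all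
large `n`, the number of edge-colored `(r-1)`-graphs `G` with vertex set in `[n]` whose
extension is `C_k`-free is at most `2^(C·n^(r-1)·(log₂ n)^((r-3)/(r-2)))`. -/
theorem count_colored_hypergraphs (r k : ℕ) (hr : 3 ≤ r) (hk : 3 ≤ k)
    (hke : r = 3 → Even k) :
    ∃ C : ℝ, 0 < C ∧ ∃ N : ℕ, ∀ n : ℕ, N ≤ n →
      (({p : Finset (Finset ℕ) × (Finset ℕ → ℕ) |
          p.1 ⊆ (Finset.Icc 1 n).powersetCard (r - 1) ∧
          (∀ e ∈ p.1, p.2 e ∈ Finset.Icc 1 n ∧ p.2 e ∉ e) ∧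
          (∀ e ∉ p.1, p.2 e = 0) ∧
          ¬ HasLooseCycle k (Extension p.1 p.2)} : Set _).ncard : ℝ)
        ≤ (2 : ℝ) ^ (C * (n : ℝ) ^ (r - 1) *
            (Real.logb 2 n) ^ (((r : ℝ) - 3) / ((r : ℝ) - 2))) := by
  obtain ⟨u, rfl⟩ : ∃ u, r = u + 2 := ⟨r - 2, by omega⟩
  obtain ⟨B, hB, h⟩ := LooseCount.exists_count_bound u k (by omega) hk fun hu => hke (by omega)
  refine ⟨B, by exact_mod_cast hB, 2, fun n hn => ?_⟩
  rw [show u + 2 - 1 = u + 1 by omega]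
  refine (h n hn).trans ?_
  have hn' : (2 : ℝ) ≤ n := by exact_mod_cast hn
  have hu : (1 : ℝ) ≤ u := by exact_mod_cast (show 1 ≤ u by omega)
  have hlog : 1 ≤ Real.logb 2 n := by
    rw [Real.le_logb_iff_rpow_le (by norm_num) (by linarith), Real.rpow_one]
    exact hn'
  -- the logarithmic factor is at least one, so it may be inserted
  have hone : 1 ≤ (Real.logb 2 n) ^ ((((u + 2 : ℕ) : ℝ) - 3) / (((u + 2 : ℕ) : ℝ) - 2)) := by
    refine Real.one_le_rpow hlog (div_nonneg ?_ ?_) <;> push_cast <;> linarith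
  rw [← Real.rpow_natCast]
  refine Real.rpow_le_rpow_of_exponent_le (by norm_num) ?_
  push_cast
  push_cast at hone
  exact le_mul_of_one_le_right (by positivity) hone
end

section
/- Let l ≥ 2 and s, t ≥ 1 be integers, let G = K_{s,t} be an edge-colored complete bipartite graph with vertex set V(G) ⊆ [n] (each edge e colored by z_e ∈ [n] \ e), and let Z = {z_e : e ∈ G} be the set of colors used. If G contains no strongly rainbow colored cycle of length 2l, then |Z| < 2l·(s+t). -/
/-!
Suppose there are at least `2l(s+t)` colours. At most `s + t` of them are vertices of `K_{s,t}`, so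
one may choose a set `F` of at least `(2l-1)(s+t)` edges whose colours are pairwise distinct and lie
outside the vertex set.

*Finding a long cycle.* A smallest nonempty vertex set `W` spanning at least `(2l-1)|W|` edges of
`F` has minimum degree at least `2l-1` (`exists_min_degree`). The first vertex `x 0` of a longest
`F`-path in `W` has all its neighbours on that path (`exists_long_path`), so by pigeonhole two of
them, `x i` and `x j` with `i < j`, satisfy `i ≡ j` modulo `2l-2`. Hence `x 0, x i, …, x j` is an
`F`-cycle of length `k(2l-2)+2` for some `k ≥ 1`.

*Shortening it.* A chord of a strongly rainbow cycle splits it into two shorter cycles. The colour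
of the chord is spoiled, as an edge colour or as a vertex, on at most one side, so one of the two
cycles is again strongly rainbow. A chord that cuts off a cycle of length exactly `2l` leaves one of
length `(k-1)(2l-2)+2`, so induction on `k` produces a strongly rainbow cycle of length `2l`
(`cycle_of_closed_path`).
-/


/-- The edge set of the complete bipartite graph with parts `A` and `B`. -/
def completeBipartiteEdges (A B : Finset ℕ) : Finset (Finset ℕ) :=
  (A ×ˢ B).image fun p => ({p.1, p.2} : Finset ℕ)

/-- An edge-colored graph `G` (with coloring `χ`) contains a strongly rainbow colored
cycle of length `m`: distinct vertices `x 0, …, x (m-1)` forming a cycle in `G` whose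
edges receive pairwise distinct colors, none of which is a vertex of the cycle. -/
def HasStronglyRainbowCycle (m : ℕ) (G : Finset (Finset ℕ)) (χ : Finset ℕ → ℕ) : Prop :=
  ∃ x : ZMod m → ℕ, Function.Injective x ∧
    (∀ i, ({x i, x (i + 1)} : Finset ℕ) ∈ G) ∧
    (Function.Injective fun i => χ ({x i, x (i + 1)} : Finset ℕ)) ∧
    (∀ i j, χ ({x i, x (i + 1)} : Finset ℕ) ≠ x j)

/-! ### Edges, paths and cycles in sequence form -/

theorem pair_mem_completeBipartiteEdges {A B : Finset ℕ} {a b : ℕ} :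
    ({a, b} : Finset ℕ) ∈ completeBipartiteEdges A B ↔ (a ∈ A ∧ b ∈ B) ∨ (a ∈ B ∧ b ∈ A) := by
  unfold completeBipartiteEdges
  simp only [Finset.mem_image, Finset.mem_product, Prod.exists]
  constructor
  · rintro ⟨c, d, ⟨hc, hd⟩, h⟩
    have h1 : c = a ∧ d = b ∨ c = b ∧ d = a := by
      apply Set.pair_eq_pair_iff.1
      simpa using congrArg (fun s : Finset ℕ => (s : Set ℕ)) h
    rcases h1 with ⟨rfl, rfl⟩ | ⟨rfl, rfl⟩ <;> tauto
  · rintro (⟨h1, h2⟩ | ⟨h1, h2⟩)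
    · exact ⟨a, b, ⟨h1, h2⟩, rfl⟩
    · exact ⟨b, a, ⟨h2, h1⟩, Finset.pair_comm _ _⟩

/-- The sequence `a, x 0, x 1, …`. -/
def consSeq (a : ℕ) (x : ℕ → ℕ) : ℕ → ℕ
  | 0 => a
  | i + 1 => x i

/-- A cycle given by a sequence `y 0, …, y N` with closing edge `{y N, y 0}`, rewritten in the
cyclically indexed form. -/
theorem hasStronglyRainbowCycle_of_seq {G : Finset (Finset ℕ)} {χ : Finset ℕ → ℕ} (N : ℕ)
    (y : ℕ → ℕ)
    (hinj : ∀ i ≤ N, ∀ j ≤ N, y i = y j → i = j)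
    (hG : ∀ i < N, ({y i, y (i + 1)} : Finset ℕ) ∈ G) (hGN : ({y N, y 0} : Finset ℕ) ∈ G)
    (hcol : ∀ i < N, ∀ j < N, χ {y i, y (i + 1)} = χ {y j, y (j + 1)} → i = j)
    (hcolN : ∀ i < N, χ {y i, y (i + 1)} ≠ χ {y N, y 0})
    (hv : ∀ i < N, ∀ j ≤ N, χ {y i, y (i + 1)} ≠ y j)
    (hvN : ∀ j ≤ N, χ {y N, y 0} ≠ y j) :
    HasStronglyRainbowCycle (N + 1) G χ := by
  -- `ZMod (N + 1)` is by definition `Fin (N + 1)`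
  have key : ∀ i : ZMod (N + 1), (i.val < N ∧ (i + 1).val = i.val + 1) ∨
      (i.val = N ∧ (i + 1).val = 0) := by
    intro i
    have hi : i.val < N + 1 := ZMod.val_lt i
    rcases Nat.lt_or_ge i.val N with h | h
    · left
      exact ⟨h, Fin.val_add_one_of_lt (n := N) (i := i) h⟩
    · right
      have : i.val = N := by omega
      refine ⟨this, ?_⟩
      have h2 : i = Fin.last N := Fin.ext this
      subst h2
      exact congrArg Fin.val (Fin.last_add_one N)
  have le : ∀ i : ZMod (N + 1), i.val ≤ N := fun i => Nat.lt_succ_iff.1 (ZMod.val_lt i)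
  refine ⟨fun i => y i.val, ?_, ?_, ?_, ?_⟩
  · intro i j h
    exact ZMod.val_injective _ (hinj _ (le i) _ (le j) h)
  · intro i
    rcases key i with ⟨h, e⟩ | ⟨h, e⟩
    · simp only [e]; exact hG _ h
    · simp only [e, h]; exact hGN
  · intro i j h
    apply ZMod.val_injective
    simp only at h
    rcases key i with ⟨hi, e⟩ | ⟨hi, e⟩ <;> rcases key j with ⟨hj, e'⟩ | ⟨hj, e'⟩ <;>
      rw [e, e'] at h
    · exact hcol _ hi _ hj h
    · rw [hj] at h; exact absurd h (hcolN _ hi)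
    · rw [hi] at h; exact absurd h.symm (hcolN _ hj)
    · rw [hi, hj]
  · intro i j
    simp only
    rcases key i with ⟨h, e⟩ | ⟨h, e⟩
    · rw [e]; exact hv _ h _ (le j)
    · rw [e, h]; exact hvN _ (le j)

/-- Along a path the two sides alternate, so `y i` and `y 0` are joined by an edge of the complete
bipartite graph when `i` is odd, and lie on the same side when `i` is even. -/
theorem parity_of_path {A B : Finset ℕ} (hAB : Disjoint A B) (y : ℕ → ℕ) (N : ℕ)
    (hG : ∀ i < N, ({y i, y (i + 1)} : Finset ℕ) ∈ completeBipartiteEdges A B) :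
    ∀ i ≤ N, (Odd i → ({y i, y 0} : Finset ℕ) ∈ completeBipartiteEdges A B) ∧
      (Even i → (y i ∈ A ↔ y 0 ∈ A) ∧ (y i ∈ B ↔ y 0 ∈ B)) := by
  have hd : ∀ a, a ∈ A → a ∈ B → False := fun a h h' => Finset.disjoint_left.1 hAB h h'
  intro i
  induction i with
  | zero => simp
  | succ i ih =>
    intro hi
    have h1 := ih (by omega)
    have h2 := pair_mem_completeBipartiteEdges.1 (hG i (by omega))
    rw [pair_mem_completeBipartiteEdges] at h1 ⊢
    have d1 := hd (y i)
    have d2 := hd (y (i + 1))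
    have d3 := hd (y 0)
    clear ih hG hd
    rcases Nat.even_or_odd i with h | h
    · have h3 : ¬ Even (i + 1) := by grind
      have h4 := h1.2 h
      refine ⟨fun _ => ?_, fun h' => absurd h' h3⟩
      rw [h4.1, h4.2] at h2
      tauto
    · have h3 : ¬ Odd (i + 1) := by grind
      have h4 := h1.1 h
      refine ⟨fun h' => absurd h' h3, fun _ => ?_⟩
      clear h1 h3 h
      grind

/-! ### Shortening a cycle by chords -/

/-- The chord-cutting induction. The path `y 0, …, y N` uses edges of `F`, whose colours are
distinct and are not vertices; the colour of the closing edge `{y N, y 0}` need only avoid the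
vertices and the edge colours of this path, which is what survives the cut.
Here `l = r + 2` and `N = (k + 1)(2l - 2) + 1`. -/
theorem cycle_of_closed_path {A B : Finset ℕ} (hAB : Disjoint A B) {χ : Finset ℕ → ℕ}
    (hχ : ∀ e ∈ completeBipartiteEdges A B, χ e ∉ e)
    {F : Finset (Finset ℕ)} (hFG : F ⊆ completeBipartiteEdges A B)
    (hFinj : ∀ e ∈ F, ∀ f ∈ F, χ e = χ f → e = f)
    (y : ℕ → ℕ) (hFv : ∀ e ∈ F, ∀ i, χ e ≠ y i) (r : ℕ) (k : ℕ)
    (hinj : ∀ i ≤ (k + 1) * (2 * r + 2) + 1, ∀ j ≤ (k + 1) * (2 * r + 2) + 1, y i = y j → i = j)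
    (hF : ∀ i < (k + 1) * (2 * r + 2) + 1, ({y i, y (i + 1)} : Finset ℕ) ∈ F)
    (hcolN : ∀ i < (k + 1) * (2 * r + 2) + 1,
      χ {y i, y (i + 1)} ≠ χ {y ((k + 1) * (2 * r + 2) + 1), y 0})
    (hvN : ∀ j ≤ (k + 1) * (2 * r + 2) + 1, χ {y ((k + 1) * (2 * r + 2) + 1), y 0} ≠ y j) :
    HasStronglyRainbowCycle (2 * r + 4) (completeBipartiteEdges A B) χ := by
  have hcolinj : ∀ N, (∀ i ≤ N, ∀ j ≤ N, y i = y j → i = j) →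
      (∀ i < N, ({y i, y (i + 1)} : Finset ℕ) ∈ F) → ∀ i < N, ∀ j < N,
      χ {y i, y (i + 1)} = χ {y j, y (j + 1)} → i = j := by
    intro N hinj hF i hi j hj h
    have h1 := hFinj _ (hF i hi) _ (hF j hj) h
    have h2 : y i ∈ ({y j, y (j + 1)} : Finset ℕ) := h1 ▸ by simp
    have h3 : y (i + 1) ∈ ({y j, y (j + 1)} : Finset ℕ) := h1 ▸ by simp
    simp only [Finset.mem_insert, Finset.mem_singleton] at h2 h3
    have e1 := hinj i (by omega) j (by omega)
    have e2 := hinj i (by omega) (j + 1) (by omega)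
    have e3 := hinj (i + 1) (by omega) j (by omega)
    have e4 := hinj (i + 1) (by omega) (j + 1) (by omega)
    rcases h2 with h2 | h2
    · exact e1 h2
    · rcases h3 with h3 | h3
      · have := e2 h2; have := e3 h3; omega
      · have := e2 h2; have := e4 h3; omega
  induction k with
  | zero =>
    have hN : (0 + 1) * (2 * r + 2) + 1 = 2 * r + 3 := by ring
    rw [hN] at hinj hF hcolN hvN
    refine hasStronglyRainbowCycle_of_seq (2 * r + 3) y hinj (fun i hi => hFG (hF i hi)) ?_
      (hcolinj _ hinj hF) hcolN (fun i hi j _ => hFv _ (hF i hi) j) hvN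
    exact (parity_of_path hAB y _ (fun i hi => hFG (hF i hi)) _ le_rfl).1 ⟨r + 1, by ring⟩
  | succ k ih =>
    obtain ⟨J, hJ⟩ : ∃ J, J = (k + 1) * (2 * r + 2) + 1 := ⟨_, rfl⟩
    have hN : (k + 1 + 1) * (2 * r + 2) + 1 = J + 2 * r + 2 := by rw [hJ]; ring
    rw [hN] at hinj hF hcolN hvN
    rw [← hJ] at ih
    have hodd : Odd J := ⟨(k + 1) * (r + 1), by rw [hJ]; ring⟩
    have hpar := parity_of_path hAB y _ (fun i hi => hFG (hF i hi))
    have hchord := (hpar J (by omega)).1 hodd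
    have hclose := (hpar (J + 2 * r + 2) le_rfl).1 (by grind)
    have hcc := hcolinj _ hinj hF
    by_cases hgood : (∀ i < J, χ {y i, y (i + 1)} ≠ χ {y J, y 0}) ∧
        (∀ j ≤ J, χ {y J, y 0} ≠ y j)
    · exact ih (fun i hi j hj => hinj i (by omega) j (by omega)) (fun i hi => hF i (by omega))
        hgood.1 hgood.2
    -- The chord's colour is spoiled on the side `y 0, …, y J`; it is then fine on the side
    -- `y 0, y J, …, y N`, which has length `2r + 4`.
    have hself := hχ _ hchord
    simp only [Finset.mem_insert, Finset.mem_singleton, not_or] at hself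
    have hbad : (∃ i < J, χ {y i, y (i + 1)} = χ {y J, y 0}) ∨
        (∃ j, 0 < j ∧ j < J ∧ χ {y J, y 0} = y j) := by
      by_contra hcon
      apply hgood
      push Not at hcon
      refine ⟨hcon.1, fun j hj h => ?_⟩
      rcases Nat.eq_zero_or_pos j with h0 | h0
      · subst h0; exact hself.2 h
      · rcases Nat.lt_or_ge j J with h1 | h1
        · exact hcon.2 j h0 h1 h
        · have : j = J := by omega
          subst this; exact hself.1 h
    have c1 : ∀ i, J ≤ i → i < J + 2 * r + 2 → χ {y i, y (i + 1)} ≠ χ {y J, y 0} := by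
      intro i h1 h2 h
      rcases hbad with ⟨j, hj, e⟩ | ⟨j, _, hj, e⟩
      · have := hcc i h2 j (by omega) (h.trans e.symm)
        omega
      · exact hFv _ (hF i h2) j (h.trans e)
    have c2 : χ {y (J + 2 * r + 2), y 0} ≠ χ {y J, y 0} := by
      intro h
      rcases hbad with ⟨j, hj, e⟩ | ⟨j, _, hj, e⟩
      · exact hcolN j (by omega) (e.trans h.symm)
      · exact hvN j (by omega) (h.trans e)
    have c3 : ∀ i, J ≤ i → i ≤ J + 2 * r + 2 → χ {y J, y 0} ≠ y i := by
      intro i h1 h2 h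
      rcases hbad with ⟨j, hj, e⟩ | ⟨j, _, hj, e⟩
      · exact hFv _ (hF j (by omega)) i (e.trans h)
      · have := hinj j (by omega) i h2 (e.symm.trans h)
        omega
    -- The short cycle is presented as `y 0, y J, …, y N`, so its first edge is the chord.
    refine hasStronglyRainbowCycle_of_seq (2 * r + 3) (consSeq (y 0) fun i => y (J + i))
      ?_ ?_ ?_ ?_ ?_ ?_ ?_
    · rintro (_ | i) hi (_ | j) hj h
      · rfl
      · have := hinj 0 (by omega) (J + j) (by omega) h; omega
      · have := hinj (J + i) (by omega) 0 (by omega) h; omega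
      · have := hinj (J + i) (by omega) (J + j) (by omega) h; omega
    · rintro (_ | i) hi
      · change ({y 0, y J} : Finset ℕ) ∈ _
        rw [Finset.pair_comm]; exact hchord
      · exact hFG (hF (J + i) (by omega))
    · exact hclose
    · rintro (_ | i) hi (_ | j) hj h
      · rfl
      · change χ {y 0, y J} = χ {y (J + j), y (J + j + 1)} at h
        rw [Finset.pair_comm] at h
        exact absurd h.symm (c1 _ (by omega) (by omega))
      · change χ {y (J + i), y (J + i + 1)} = χ {y 0, y J} at h
        rw [Finset.pair_comm (y 0)] at h
        exact absurd h (c1 _ (by omega) (by omega))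
      · have := hcc (J + i) (by omega) (J + j) (by omega) h; omega
    · rintro (_ | i) hi
      · change χ {y 0, y J} ≠ χ {y (J + 2 * r + 2), y 0}
        rw [Finset.pair_comm]; exact c2.symm
      · exact hcolN (J + i) (by omega)
    · rintro (_ | i) hi (_ | j) hj
      · change χ {y 0, y J} ≠ y 0
        rw [Finset.pair_comm]; exact hself.2
      · change χ {y 0, y J} ≠ y (J + j)
        rw [Finset.pair_comm]; exact c3 _ (by omega) (by omega)
      · exact hFv _ (hF (J + i) (by omega)) 0
      · exact hFv _ (hF (J + i) (by omega)) (J + j)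
    · rintro (_ | j) hj
      · exact hvN 0 (by omega)
      · exact hvN (J + j) (by omega)

/-! ### Minimum degree and longest paths -/

/-- A graph with at least `d` edges per vertex has a nonempty vertex set inducing minimum degree
at least `d`. -/
theorem exists_min_degree (F : Finset (Finset ℕ)) (V : Finset ℕ) (d : ℕ)
    (hF : ∀ e ∈ F, ∃ a b, e = {a, b}) (hV : V.Nonempty)
    (hd : d * V.card ≤ (F.filter (· ⊆ V)).card) :
    ∃ W : Finset ℕ, W.Nonempty ∧
      ∀ w ∈ W, d ≤ (W.filter fun b => ({w, b} : Finset ℕ) ∈ F).card := by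
  induction h : V.card using Nat.strong_induction_on generalizing V with
  | _ n ih =>
  by_cases hall : ∀ w ∈ V, d ≤ (V.filter fun b => ({w, b} : Finset ℕ) ∈ F).card
  · exact ⟨V, hV, hall⟩
  push Not at hall
  obtain ⟨w, hw, hlt⟩ := hall
  have hcard : (V.erase w).card + 1 = V.card := Finset.card_erase_add_one hw
  have hsub : F.filter (· ⊆ V) ⊆ F.filter (· ⊆ V.erase w) ∪
      (V.filter fun b => ({w, b} : Finset ℕ) ∈ F).image fun b => {w, b} := by
    intro e he
    rw [Finset.mem_filter] at he
    rw [Finset.mem_union]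
    by_cases hwe : w ∈ e
    · right
      obtain ⟨a, b, rfl⟩ := hF e he.1
      rw [Finset.mem_image]
      simp only [Finset.mem_insert, Finset.mem_singleton] at hwe
      rcases hwe with rfl | rfl
      · exact ⟨b, Finset.mem_filter.2 ⟨he.2 (by simp), he.1⟩, rfl⟩
      · refine ⟨a, Finset.mem_filter.2 ⟨he.2 (by simp), ?_⟩, Finset.pair_comm _ _⟩
        rw [Finset.pair_comm]; exact he.1
    · left
      exact Finset.mem_filter.2 ⟨he.1, Finset.subset_erase.2 ⟨he.2, hwe⟩⟩
  have hle : (F.filter (· ⊆ V)).card ≤ (F.filter (· ⊆ V.erase w)).card +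
      (V.filter fun b => ({w, b} : Finset ℕ) ∈ F).card :=
    (Finset.card_le_card hsub).trans ((Finset.card_union_le _ _).trans
      (Nat.add_le_add_left Finset.card_image_le _))
  have hmul : d * V.card = d * (V.erase w).card + d := by rw [← hcard]; ring
  have hpos : 0 < (F.filter (· ⊆ V.erase w)).card := by omega
  obtain ⟨e, he⟩ := Finset.card_pos.1 hpos
  rw [Finset.mem_filter] at he
  obtain ⟨a, b, rfl⟩ := hF e he.1
  exact ih _ (by omega) (V.erase w) ⟨a, he.2 (by simp)⟩ (by omega) rfl

/-- The first vertex of a longest path inside `W` has all its neighbours in `W` on the path. -/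
theorem exists_long_path (F : Finset (Finset ℕ)) (W : Finset ℕ) (hW : W.Nonempty) :
    ∃ (m : ℕ) (x : ℕ → ℕ), (∀ i ≤ m, ∀ j ≤ m, x i = x j → i = j) ∧ (∀ i ≤ m, x i ∈ W) ∧
      (∀ i < m, ({x i, x (i + 1)} : Finset ℕ) ∈ F) ∧
      ∀ b ∈ W, ({x 0, b} : Finset ℕ) ∈ F → ∃ i ≤ m, x i = b := by
  classical
  let P : ℕ → Prop := fun m => ∃ x : ℕ → ℕ, (∀ i ≤ m, ∀ j ≤ m, x i = x j → i = j) ∧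
    (∀ i ≤ m, x i ∈ W) ∧ (∀ i < m, ({x i, x (i + 1)} : Finset ℕ) ∈ F)
  have hbound : ∀ m, P m → m ≤ W.card := by
    rintro m ⟨x, h1, h2, -⟩
    have := Finset.card_le_card_of_injOn (s := Finset.range (m + 1)) (t := W) x
      (fun i hi => h2 i (by simp at hi; omega))
      (fun i hi j hj h => h1 i (by simp at hi; omega) j (by simp at hj; omega) h)
    simp at this
    omega
  obtain ⟨w, hw⟩ := hW
  have h0 : P 0 := ⟨fun _ => w, fun i hi j hj _ => by omega, fun _ _ => hw, fun i hi => by omega⟩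
  have hm : P (Nat.findGreatest P W.card) := Nat.findGreatest_spec (Nat.zero_le _) h0
  set m := Nat.findGreatest P W.card with hmdef
  obtain ⟨x, h1, h2, h3⟩ := hm
  refine ⟨m, x, h1, h2, h3, fun b hb hbF => ?_⟩
  by_contra hcon
  push Not at hcon
  have hP : P (m + 1) := by
    refine ⟨consSeq b x, ?_, ?_, ?_⟩
    · rintro (_ | i) hi (_ | j) hj h
      · rfl
      · exact absurd h.symm (hcon j (by omega))
      · exact absurd h (hcon i (by omega))
      · have := h1 i (by omega) j (by omega) h; omega
    · rintro (_ | i) hi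
      · exact hb
      · exact h2 i (by omega)
    · rintro (_ | i) hi
      · change ({b, x 0} : Finset ℕ) ∈ F
        rw [Finset.pair_comm]; exact hbF
      · exact h3 i (by omega)
  have := Nat.le_findGreatest (hbound _ hP) hP
  omega

/-! ### From many colours to a cycle -/

/-- If `l ≥ 2`, an edge-coloured `K_{A,B}` with `F` a set of at least `(2l-1)(|A|+|B|)` edges of
distinct colours outside `A ∪ B` has a strongly rainbow cycle of length `2l`; here `l = r + 2`. -/
theorem cycle_of_many_edges {A B : Finset ℕ} (hAB : Disjoint A B) {χ : Finset ℕ → ℕ}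
    (hχ : ∀ e ∈ completeBipartiteEdges A B, χ e ∉ e)
    {F : Finset (Finset ℕ)} (hFG : F ⊆ completeBipartiteEdges A B)
    (hFinj : ∀ e ∈ F, ∀ f ∈ F, χ e = χ f → e = f)
    (hFv : ∀ e ∈ F, χ e ∉ A ∪ B) (r : ℕ) (hne : (A ∪ B).Nonempty)
    (hcard : (2 * r + 3) * (A ∪ B).card ≤ F.card) :
    HasStronglyRainbowCycle (2 * r + 4) (completeBipartiteEdges A B) χ := by
  have hpair : ∀ e ∈ F, ∃ a b, e = {a, b} := by
    intro e he
    have := hFG he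
    unfold completeBipartiteEdges at this
    obtain ⟨p, -, rfl⟩ := Finset.mem_image.1 this
    exact ⟨_, _, rfl⟩
  have hmem : ∀ a b, ({a, b} : Finset ℕ) ∈ F → a ∈ A ∪ B ∧ b ∈ A ∪ B ∧ a ≠ b := by
    intro a b h
    have h1 := pair_mem_completeBipartiteEdges.1 (hFG h)
    simp only [Finset.mem_union]
    refine ⟨by tauto, by tauto, ?_⟩
    rintro rfl
    exact Finset.disjoint_left.1 hAB (show a ∈ A by tauto) (by tauto)
  have hfilter : F.filter (· ⊆ A ∪ B) = F := by
    apply Finset.filter_true_of_mem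
    intro e he
    obtain ⟨a, b, rfl⟩ := hpair e he
    have := hmem a b he
    intro v hv
    simp only [Finset.mem_insert, Finset.mem_singleton] at hv
    rcases hv with rfl | rfl
    · exact this.1
    · exact this.2.1
  obtain ⟨W, hWne, hW⟩ := exists_min_degree F (A ∪ B) (2 * r + 3) hpair hne (by rwa [hfilter])
  obtain ⟨m, x, hinj, hxW, hxF, hxN⟩ := exists_long_path F W hWne
  have hdeg := hW (x 0) (hxW 0 (by omega))
  let I := (Finset.range (m + 1)).filter fun i => ({x 0, x i} : Finset ℕ) ∈ F
  have hI : 2 * r + 3 ≤ I.card := by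
    refine hdeg.trans ((Finset.card_le_card (t := I.image x) ?_).trans Finset.card_image_le)
    intro b hb
    rw [Finset.mem_filter] at hb
    obtain ⟨i, hi, rfl⟩ := hxN b hb.1 hb.2
    exact Finset.mem_image_of_mem _ (Finset.mem_filter.2 ⟨by simp; omega, hb.2⟩)
  obtain ⟨i, hi, j, hj, hij, hmod⟩ : ∃ i ∈ I, ∃ j ∈ I, i < j ∧ i % (2 * r + 2) = j % (2 * r + 2) := by
    obtain ⟨i, hi, j, hj, hij, h⟩ := Finset.exists_ne_map_eq_of_card_lt_of_maps_to
      (s := I) (t := Finset.range (2 * r + 2)) (f := fun i => i % (2 * r + 2))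
      (by simp; omega) (fun i _ => by simpa using Nat.mod_lt _ (by omega))
    rcases Nat.lt_or_gt_of_ne hij with h' | h'
    · exact ⟨i, hi, j, hj, h', h⟩
    · exact ⟨j, hj, i, hi, h', h.symm⟩
  simp only [I, Finset.mem_filter, Finset.mem_range] at hi hj
  have hi0 : 0 < i := by
    rcases Nat.eq_zero_or_pos i with rfl | h
    · exact absurd rfl (hmem _ _ hi.2).2.2
    · exact h
  obtain ⟨k, hk⟩ : ∃ k, j = i + (k + 1) * (2 * r + 2) := by
    obtain ⟨c, hc⟩ := (Nat.modEq_iff_dvd' hij.le).1 hmod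
    rcases c with _ | k
    · omega
    · refine ⟨k, ?_⟩
      rw [Nat.mul_comm]; omega
  -- The closed path `x 0, x i, …, x j`, continued by the constant `x j` so that all its terms are
  -- vertices.
  let y : ℕ → ℕ := consSeq (x 0) fun a => x (min (i + a) j)
  obtain ⟨D, hD⟩ : ∃ D, D = (k + 1) * (2 * r + 2) := ⟨_, rfl⟩
  have hy : ∀ a, a ≤ D → y (a + 1) = x (i + a) := by
    intro a ha
    change x (min (i + a) j) = _
    rw [min_eq_left (by omega)]
  have hy0 : y 0 = x 0 := rfl
  have hyV : ∀ a, y a ∈ A ∪ B := by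
    have hxV : ∀ a ≤ m, x a ∈ A ∪ B := by
      intro a ha
      rcases Nat.lt_or_ge a m with h | h
      · exact (hmem _ _ (hxF a h)).1
      · have := (hmem _ _ (hxF (a - 1) (by omega))).2.1
        rwa [Nat.sub_add_cancel (by omega)] at this
    rintro (_ | a)
    · exact hxV 0 (by omega)
    · exact hxV (min (i + a) j) (by omega)
  have hyinj : ∀ a ≤ D + 1, ∀ b ≤ D + 1, y a = y b → a = b := by
    rintro (_ | a) ha (_ | b) hb h
    · rfl
    · rw [hy b (by omega), hy0] at h
      have := hinj 0 (by omega) (i + b) (by omega) h; omega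
    · rw [hy a (by omega), hy0] at h
      have := hinj (i + a) (by omega) 0 (by omega) h; omega
    · rw [hy a (by omega), hy b (by omega)] at h
      have := hinj (i + a) (by omega) (i + b) (by omega) h; omega
  have hyF : ∀ a < D + 1, ({y a, y (a + 1)} : Finset ℕ) ∈ F := by
    rintro (_ | a) ha
    · rw [hy 0 (by omega), hy0]; exact hi.2
    · rw [hy a (by omega), hy (a + 1) (by omega)]
      exact hxF (i + a) (by omega)
  have hyC : ({y (D + 1), y 0} : Finset ℕ) ∈ F := by
    rw [hy D le_rfl, hy0, Finset.pair_comm, hD, ← hk]; exact hj.2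
  have hFy : ∀ e ∈ F, ∀ a, χ e ≠ y a := fun e he a h => hFv e he (h ▸ hyV a)
  refine cycle_of_closed_path hAB hχ hFG hFinj y hFy r k ?_ ?_ ?_ ?_ <;> rw [← hD]
  · exact hyinj
  · exact hyF
  · intro a ha h
    have h1 := hFinj _ (hyF a ha) _ hyC h
    have h2 : y a ∈ ({y (D + 1), y 0} : Finset ℕ) := h1 ▸ by simp
    have h3 : y (a + 1) ∈ ({y (D + 1), y 0} : Finset ℕ) := h1 ▸ by simp
    simp only [Finset.mem_insert, Finset.mem_singleton] at h2 h3
    have e1 := hyinj a (by omega) (D + 1) (by omega)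
    have e2 := hyinj a (by omega) 0 (by omega)
    have e3 := hyinj (a + 1) (by omega) (D + 1) (by omega)
    have e4 := hyinj (a + 1) (by omega) 0 (by omega)
    -- the path has at least two edges, so its closing edge is not one of them
    have hD2 : 2 ≤ D := by rw [hD]; nlinarith
    rcases h2 with h2 | h2 <;> rcases h3 with h3 | h3
    · have := e1 h2; omega
    · have := e4 h3; omega
    · have := e2 h2; have := e3 h3; omega
    · have := e4 h3; omega
  · intro a _
    exact hFy _ hyC a

/-- If an edge-colored `K_{s,t}` with vertices in `[n]` contains no strongly rainbow
colored cycle of length `2l`, then it uses fewer than `2l·(s+t)` colors. -/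
theorem few_colors_of_no_strongly_rainbow_cycle (l s t n : ℕ) (hl : 2 ≤ l)
    (hs : 1 ≤ s) (ht : 1 ≤ t)
    (A B : Finset ℕ) (hA : A ⊆ Finset.Icc 1 n) (hB : B ⊆ Finset.Icc 1 n)
    (hAB : Disjoint A B) (hAc : A.card = s) (hBc : B.card = t)
    (G : Finset (Finset ℕ)) (hG : G = completeBipartiteEdges A B)
    (χ : Finset ℕ → ℕ) (hχ : ∀ e ∈ G, χ e ∈ Finset.Icc 1 n ∧ χ e ∉ e)
    (hno : ¬ HasStronglyRainbowCycle (2 * l) G χ) :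
    (G.image χ).card < 2 * l * (s + t) := by
  subst hG
  by_contra hcon
  push Not at hcon
  apply hno
  obtain ⟨r, rfl⟩ : ∃ r, l = r + 2 := ⟨l - 2, by omega⟩
  have hVc : (A ∪ B).card = s + t := by rw [Finset.card_union_of_disjoint hAB, hAc, hBc]
  set Z := ((completeBipartiteEdges A B).image χ) \ (A ∪ B) with hZ
  have hZc : (2 * r + 3) * (s + t) ≤ Z.card := by
    have h1 := Finset.le_card_sdiff (A ∪ B) ((completeBipartiteEdges A B).image χ)
    rw [hVc, ← hZ] at h1
    have h2 : 2 * (r + 2) * (s + t) = (2 * r + 3) * (s + t) + (s + t) := by ring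
    omega
  -- one edge for each colour in `Z`
  have hex : ∀ c ∈ Z, ∃ e ∈ completeBipartiteEdges A B, χ e = c := by
    intro c hc
    exact Finset.mem_image.1 (Finset.mem_sdiff.1 hc).1
  choose! g hg hgc using hex
  have hcyc : HasStronglyRainbowCycle (2 * r + 4) (completeBipartiteEdges A B) χ := by
    refine cycle_of_many_edges (F := Z.image g) hAB (fun e he => (hχ e he).2) ?_ ?_ ?_ r ?_ ?_
    · intro e he
      obtain ⟨c, hc, rfl⟩ := Finset.mem_image.1 he
      exact hg c hc
    · intro e he f hf h
      obtain ⟨c, hc, rfl⟩ := Finset.mem_image.1 he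
      obtain ⟨d, hd, rfl⟩ := Finset.mem_image.1 hf
      rw [hgc c hc, hgc d hd] at h
      rw [h]
    · intro e he
      obtain ⟨c, hc, rfl⟩ := Finset.mem_image.1 he
      rw [hgc c hc]
      exact (Finset.mem_sdiff.1 hc).2
    · rw [← Finset.card_pos]; omega
    · rw [hVc, Finset.card_image_of_injOn]
      · exact hZc
      · intro c hc d hd h
        rw [← hgc c hc, ← hgc d hd]
        exact congrArg χ h
  exact hcyc
end
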